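/- arXiv:1911.03467 — 16 statements merged into one kernel-verified Lean document; each statement's English description precedes it below -/
import Mathlib

section
/- Let t ∈ [−1,1]. Then Spearman's rho of the lower bound copula B̲_t equals ρ(B̲_t) = (3/16)(1+t)³ − 1; explicitly, 12·∫₀¹∫₀¹ B̲_t(u,v) du dv − 3 = (3/16)(1+t)³ − 1. -/
/-- The lower bound copula `B̲_t` of the set of copulas with Blomqvist's beta equal to `t`:
`B̲_t(u,v) = max{0, u+v−1, (1+t)/4 − (1/2−u)⁺ − (1/2−v)⁺}`. -/
noncomputable def Blower (t u v : ℝ) : ℝ :=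
  max (max 0 (u + v - 1)) ((1 + t) / 4 - max (1 / 2 - u) 0 - max (1 / 2 - v) 0)

theorem int_pos_part (c : ℝ) (h0 : 0 ≤ c) (h1 : c ≤ 1) :
    ∫ v in (0:ℝ)..1, max (v - c) 0 = (1 - c) ^ 2 / 2 := by
  have hi : ∀ a b : ℝ, IntervalIntegrable (fun v : ℝ => max (v - c) 0) MeasureTheory.volume a b :=
    fun a b => Continuous.intervalIntegrable (by fun_prop) a b
  rw [← intervalIntegral.integral_add_adjacent_intervals (hi 0 c) (hi c 1)]
  have e1 : ∫ v in (0:ℝ)..c, max (v - c) 0 = ∫ v in (0:ℝ)..c, (0:ℝ) := by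
    apply intervalIntegral.integral_congr
    intro v hv
    rw [Set.uIcc_of_le h0] at hv
    exact max_eq_right (by linarith [hv.2])
  have e2 : ∫ v in c..1, max (v - c) 0 = ∫ v in c..1, (v - c) := by
    apply intervalIntegral.integral_congr
    intro v hv
    rw [Set.uIcc_of_le h1] at hv
    exact max_eq_left (by linarith [hv.1])
  rw [e1, e2, intervalIntegral.integral_sub (by simp) (by simp)]
  simp
  ring

theorem int_three (p q r k : ℝ) (hp : p ∈ Set.Icc (0:ℝ) 1) (hq : q ∈ Set.Icc (0:ℝ) 1)
    (hr : r ∈ Set.Icc (0:ℝ) 1) :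
    ∫ v in (0:ℝ)..1, (max (v - p) 0 - k * max (v - q) 0 + max (v - r) 0)
      = ((1 - p) ^ 2 - k * (1 - q) ^ 2 + (1 - r) ^ 2) / 2 := by
  rw [intervalIntegral.integral_add (Continuous.intervalIntegrable (by fun_prop) _ _)
      (Continuous.intervalIntegrable (by fun_prop) _ _),
    intervalIntegral.integral_sub (Continuous.intervalIntegrable (by fun_prop) _ _)
      (Continuous.intervalIntegrable (by fun_prop) _ _), intervalIntegral.integral_const_mul,
    int_pos_part p hp.1 hp.2, int_pos_part q hq.1 hq.2, int_pos_part r hr.1 hr.2]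
  ring

theorem inner_of (t u p q r : ℝ) (hp : p ∈ Set.Icc (0:ℝ) 1) (hq : q ∈ Set.Icc (0:ℝ) 1)
    (hr : r ∈ Set.Icc (0:ℝ) 1)
    (h : ∀ v, 0 ≤ v → v ≤ 1 →
      Blower t u v = max (v - p) 0 - 1 * max (v - q) 0 + max (v - r) 0) :
    ∫ v in (0:ℝ)..1, Blower t u v = ((1 - p) ^ 2 - 1 * (1 - q) ^ 2 + (1 - r) ^ 2) / 2 := by
  rw [← int_three p q r 1 hp hq hr]
  apply intervalIntegral.integral_congr
  intro v hv
  rw [Set.uIcc_of_le zero_le_one] at hv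
  exact h v hv.1 hv.2

theorem inner_Blower (t d u : ℝ) (hd : (1 + t) / 4 = d) (h0 : 0 ≤ d) (h1 : d ≤ 1 / 2)
    (hu0 : 0 ≤ u) (hu1 : u ≤ 1) :
    ∫ v in (0:ℝ)..1, Blower t u v = u ^ 2 / 2 + d *
      (max (u - (1 / 2 - d)) 0 - 2 * max (u - 1 / 2) 0 + max (u - (1 / 2 + d)) 0) := by
  rcases le_total u (1 / 2 - d) with a | a
  · rw [inner_of t u (1 - u) 1 1 (by constructor <;> linarith) (by simp) (by simp),
      max_eq_right (by linarith), max_eq_right (by linarith), max_eq_right (by linarith)]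
    · ring
    · intro v hv0 hv1
      rw [Blower, hd]
      grind
  rcases le_total u (1 / 2) with b | b
  · rw [inner_of t u (1 - d - u) (1 / 2) (1 / 2 + d) (by constructor <;> linarith)
      (by constructor <;> norm_num) (by constructor <;> linarith),
      max_eq_left (by linarith), max_eq_right (by linarith), max_eq_right (by linarith)]
    · ring
    · intro v hv0 hv1
      rw [Blower, hd]
      grind
  rcases le_total u (1 / 2 + d) with c | c
  · rw [inner_of t u (1 / 2 - d) (1 / 2) (1 + d - u) (by constructor <;> linarith)
      (by constructor <;> norm_num) (by constructor <;> linarith),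
      max_eq_left (by linarith), max_eq_left (by linarith), max_eq_right (by linarith)]
    · ring
    · intro v hv0 hv1
      rw [Blower, hd]
      grind
  · rw [inner_of t u (1 - u) 1 1 (by constructor <;> linarith) (by simp) (by simp),
      max_eq_left (by linarith), max_eq_left (by linarith), max_eq_left (by linarith)]
    · ring
    · intro v hv0 hv1
      rw [Blower, hd]
      grind

/-- Spearman's rho of the lower bound copula `B̲_t` equals `(3/16)(1+t)³ − 1`. -/
theorem rho_Blower (t : ℝ) (ht : t ∈ Set.Icc (-1 : ℝ) 1) :
    12 * (∫ u in (0:ℝ)..1, ∫ v in (0:ℝ)..1, Blower t u v) - 3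
      = 3 / 16 * (1 + t) ^ 3 - 1 := by
  obtain ⟨ha, hb⟩ := ht
  obtain ⟨d, hd⟩ : ∃ d, (1 + t) / 4 = d := ⟨_, rfl⟩
  have h0 : 0 ≤ d := by linarith
  have h1 : d ≤ 1 / 2 := by linarith
  have e : ∫ u in (0:ℝ)..1, ∫ v in (0:ℝ)..1, Blower t u v = ∫ u in (0:ℝ)..1, (u ^ 2 / 2 + d *
      (max (u - (1 / 2 - d)) 0 - 2 * max (u - 1 / 2) 0 + max (u - (1 / 2 + d)) 0)) := by
    apply intervalIntegral.integral_congr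
    intro u hu
    rw [Set.uIcc_of_le zero_le_one] at hu
    exact inner_Blower t d u hd h0 h1 hu.1 hu.2
  rw [e, intervalIntegral.integral_add (Continuous.intervalIntegrable (by fun_prop) _ _)
      (Continuous.intervalIntegrable (by fun_prop) _ _), intervalIntegral.integral_const_mul,
    int_three _ _ _ _ (by constructor <;> linarith) (by constructor <;> norm_num)
      (by constructor <;> linarith), intervalIntegral.integral_div, integral_pow]
  have : t = 4 * d - 1 := by linarith
  subst this
  norm_num
  ring
end

section
/- Let t ∈ [−1,1]. Then Spearman's rho of the upper bound copula B̄_t equals ρ(B̄_t) = 1 − (3/16)(1−t)³; explicitly, 12·∫₀¹∫₀¹ B̄_t(u,v) du dv − 3 = 1 − (3/16)(1−t)³. -/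
/-- The upper bound copula `B̄_t` of the set of copulas with Blomqvist's beta equal to `t`:
`B̄_t(u,v) = min{u, v, (1+t)/4 + (u−1/2)⁺ + (v−1/2)⁺}`. -/
noncomputable def Bupper (t u v : ℝ) : ℝ :=
  min (min u v) ((1 + t) / 4 + max (u - 1 / 2) 0 + max (v - 1 / 2) 0)

open MeasureTheory intervalIntegral in
theorem quad_piece (f : ℝ → ℝ) (p q c k m : ℝ) (hpq : p ≤ q)
    (h : ∀ x, p ≤ x → x ≤ q → f x = c + k * x + m * x ^ 2) :
    IntervalIntegrable f volume p q ∧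
      ∫ x in p..q, f x = c * (q - p) + k * (q ^ 2 - p ^ 2) / 2 + m * (q ^ 3 - p ^ 3) / 3 := by
  have hE : Set.EqOn f (fun x => c + k * x + m * x ^ 2) (Set.uIcc p q) := by
    intro x hx
    rw [Set.uIcc_of_le hpq] at hx
    exact h x hx.1 hx.2
  constructor
  · apply ContinuousOn.intervalIntegrable
    exact ContinuousOn.congr (by fun_prop) hE
  · rw [integral_congr hE]
    have hd : ∀ x ∈ Set.uIcc p q,
        HasDerivAt (fun x : ℝ => c * x + k * x ^ 2 / 2 + m * x ^ 3 / 3)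
          (c + k * x + m * x ^ 2) x := by
      intro x _
      have h1 := (hasDerivAt_id x).const_mul c
      have h2 := ((hasDerivAt_pow 2 x).const_mul k).div_const 2
      have h3 := ((hasDerivAt_pow 3 x).const_mul m).div_const 3
      refine HasDerivAt.congr_deriv (f := fun x : ℝ => c * x + k * x ^ 2 / 2 + m * x ^ 3 / 3)
        ((h1.add h2).add h3) ?_
      push_cast
      ring
    rw [integral_eq_sub_of_hasDerivAt hd (Continuous.intervalIntegrable (by fun_prop) _ _)]
    ring

open MeasureTheory intervalIntegral in
theorem four_pieces (f : ℝ → ℝ) (p q r s w A B C D : ℝ)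
    (h1 : IntervalIntegrable f volume p q ∧ ∫ x in p..q, f x = A)
    (h2 : IntervalIntegrable f volume q r ∧ ∫ x in q..r, f x = B)
    (h3 : IntervalIntegrable f volume r s ∧ ∫ x in r..s, f x = C)
    (h4 : IntervalIntegrable f volume s w ∧ ∫ x in s..w, f x = D) :
    ∫ x in p..w, f x = A + B + C + D := by
  rw [← integral_add_adjacent_intervals ((h1.1.trans h2.1).trans h3.1) h4.1,
    ← integral_add_adjacent_intervals (h1.1.trans h2.1) h3.1,
    ← integral_add_adjacent_intervals h1.1 h2.1, h1.2, h2.2, h3.2, h4.2]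

/-- A section of the shape `v`, then `x`, then `x + v - 1/2`, then `u`. -/
theorem section_int (t u x : ℝ) (hx0 : 0 ≤ x) (hx : x ≤ 1 / 2) (hxu : x ≤ u) (hu : u ≤ x + 1 / 2)
    (hd : u ≤ 1 / 2 + (u - x)) (he : x = (1 + t) / 4 + max (u - 1 / 2) 0) :
    ∫ v in (0:ℝ)..1, Bupper t u v =
      x ^ 2 / 2 + x * (1 / 2 - x) + (x * (u - x) + (u - x) ^ 2 / 2) + u * (1 / 2 - u + x) := by
  have hB : ∀ v, Bupper t u v = min (min u v) (x + max (v - 1 / 2) 0) := by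
    intro v; rw [Bupper, he]
  have key := four_pieces (fun v => Bupper t u v) 0 x (1/2) (1/2 + (u - x)) 1 _ _ _ _
    (quad_piece _ 0 x 0 1 0 hx0 ?_) (quad_piece _ x (1/2) x 0 0 hx ?_)
    (quad_piece _ (1/2) (1/2 + (u - x)) (x - 1/2) 1 0 (by linarith) ?_)
    (quad_piece _ (1/2 + (u - x)) 1 u 0 0 (by linarith) ?_)
  · rw [key]; ring
  all_goals
    intro v h1 h2
    simp only [hB]
    grind

theorem section_min (t u : ℝ) (h0 : 0 ≤ u) (h1 : u ≤ 1)
    (h : ∀ v, Bupper t u v = min u v) :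
    ∫ v in (0:ℝ)..1, Bupper t u v = u - u ^ 2 / 2 := by
  have key := four_pieces (fun v => Bupper t u v) 0 0 u 1 1 _ _ _ _
    (quad_piece _ 0 0 0 1 0 le_rfl ?_) (quad_piece _ 0 u 0 1 0 h0 ?_)
    (quad_piece _ u 1 u 0 0 h1 ?_)
    (quad_piece _ 1 1 u 0 0 le_rfl ?_)
  · rw [key]; ring
  all_goals
    intro v h1 h2
    simp only [h]
    grind

/-- Spearman's rho of the upper bound copula `B̄_t` equals `1 − (3/16)(1−t)³`. -/
theorem rho_Bupper (t : ℝ) (ht : t ∈ Set.Icc (-1 : ℝ) 1) :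
    12 * (∫ u in (0:ℝ)..1, ∫ v in (0:ℝ)..1, Bupper t u v) - 3
      = 1 - 3 / 16 * (1 - t) ^ 3 := by
  obtain ⟨ht1, ht2⟩ := ht
  have key := four_pieces (fun u => ∫ v in (0:ℝ)..1, Bupper t u v)
    0 ((1 + t) / 4) (1/2) (1 - (1 + t) / 4) 1 _ _ _ _
    (quad_piece _ _ _ 0 1 (-1/2) (by linarith) ?_)
    (quad_piece _ _ _ ((1 + t) / 4 * (1 / 2) - ((1 + t) / 4) ^ 2)
      (1 / 2 + (1 + t) / 4) (-1/2) (by linarith) ?_)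
    (quad_piece _ _ _ (-(1 / 2 - (1 + t) / 4) / 2 - (1 / 2 - (1 + t) / 4) ^ 2)
      (1 + (1 / 2 - (1 + t) / 4)) (-1/2) (by linarith) ?_)
    (quad_piece _ _ _ 0 1 (-1/2) (by linarith) ?_)
  · rw [key]; ring
  · intro u h1 h2
    rw [section_min t u h1 (by linarith) (by intro v; unfold Bupper; grind)]
    ring
  · intro u h1 h2
    rw [section_int t u ((1 + t) / 4) (by linarith) (by linarith) (by linarith) (by linarith)
      (by linarith) (by grind)]
    ring
  · intro u h1 h2
    rw [section_int t u ((1 + t) / 4 + u - 1/2) (by linarith) (by linarith) (by linarith) (by linarith)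
      (by linarith) (by grind)]
    ring
  · intro u h1 h2
    rw [section_min t u (by linarith) h2 (by intro v; unfold Bupper; grind)]
    ring
end

section
/- Let C be a copula, let ρ = ρ(C) = 12·∫₀¹∫₀¹ C(u,v) du dv − 3 and β(C) = 4·C(1/2,1/2) − 1. Then β(C) is bounded below by −1 if ρ ≤ −1/2 and by 1 − 2·(2(1−ρ)/3)^{1/3} if ρ > −1/2, and β(C) is bounded above by 1 if ρ ≥ 1/2 and by −1 + 2·(2(1+ρ)/3)^{1/3} if ρ < 1/2. -/
/-- A (bivariate) copula: boundary conditions on `[0,1]` and the 2-increasing property. -/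
def IsCopula (C : ℝ → ℝ → ℝ) : Prop :=
  (∀ u ∈ Set.Icc (0:ℝ) 1, C u 0 = 0 ∧ C 0 u = 0 ∧ C u 1 = u ∧ C 1 u = u) ∧
  (∀ u₁ u₂ v₁ v₂ : ℝ, 0 ≤ u₁ → u₁ ≤ u₂ → u₂ ≤ 1 → 0 ≤ v₁ → v₁ ≤ v₂ → v₂ ≤ 1 →
    0 ≤ C u₁ v₁ + C u₂ v₂ - C u₁ v₂ - C u₂ v₁)

/-- Spearman's rho of a copula. -/
noncomputable def spearmanRho (C : ℝ → ℝ → ℝ) : ℝ :=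
  12 * (∫ u in (0:ℝ)..1, ∫ v in (0:ℝ)..1, C u v) - 3

/-- Blomqvist's beta of a copula. -/
noncomputable def blomqvistBeta (C : ℝ → ℝ → ℝ) : ℝ :=
  4 * C (1/2) (1/2) - 1

lemma cop_mono_right {C : ℝ → ℝ → ℝ} (hC : IsCopula C) {u v w : ℝ} (hu : 0 ≤ u) (hu1 : u ≤ 1)
    (hv : 0 ≤ v) (hvw : v ≤ w) (hw : w ≤ 1) : C u v ≤ C u w := by
  have h := hC.2 0 u v w le_rfl hu hu1 hv hvw hw
  have h1 := (hC.1 v ⟨hv, hvw.trans hw⟩).2.1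
  have h2 := (hC.1 w ⟨hv.trans hvw, hw⟩).2.1
  linarith

lemma cop_mono_left {C : ℝ → ℝ → ℝ} (hC : IsCopula C) {u v w : ℝ} (hu : 0 ≤ u) (hu1 : u ≤ 1)
    (hv : 0 ≤ v) (hvw : v ≤ w) (hw : w ≤ 1) : C v u ≤ C w u := by
  have h := hC.2 v w 0 u hv hvw hw le_rfl hu hu1
  have h1 := (hC.1 v ⟨hv, hvw.trans hw⟩).1
  have h2 := (hC.1 w ⟨hv.trans hvw, hw⟩).1
  linarith

lemma cop_lip_right {C : ℝ → ℝ → ℝ} (hC : IsCopula C) {u v w : ℝ} (hu : 0 ≤ u) (hu1 : u ≤ 1)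
    (hv : 0 ≤ v) (hvw : v ≤ w) (hw : w ≤ 1) : C u w ≤ C u v + (w - v) := by
  have h := hC.2 u 1 v w hu hu1 le_rfl hv hvw hw
  have h1 := (hC.1 v ⟨hv, hvw.trans hw⟩).2.2.2
  have h2 := (hC.1 w ⟨hv.trans hvw, hw⟩).2.2.2
  linarith

lemma cop_lip_left {C : ℝ → ℝ → ℝ} (hC : IsCopula C) {u v w : ℝ} (hu : 0 ≤ u) (hu1 : u ≤ 1)
    (hv : 0 ≤ v) (hvw : v ≤ w) (hw : w ≤ 1) : C w u ≤ C v u + (w - v) := by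
  have h := hC.2 v w u 1 hv hvw hw hu hu1 le_rfl
  have h1 := (hC.1 v ⟨hv, hvw.trans hw⟩).2.2.1
  have h2 := (hC.1 w ⟨hv.trans hvw, hw⟩).2.2.1
  linarith

lemma cop_nonneg {C : ℝ → ℝ → ℝ} (hC : IsCopula C) {u v : ℝ} (hu : 0 ≤ u) (hu1 : u ≤ 1)
    (hv : 0 ≤ v) (hv1 : v ≤ 1) : 0 ≤ C u v := by
  have := cop_mono_right hC hu hu1 le_rfl hv hv1
  rwa [(hC.1 u ⟨hu, hu1⟩).1] at this

lemma cop_W {C : ℝ → ℝ → ℝ} (hC : IsCopula C) {u v : ℝ} (hu : 0 ≤ u) (hu1 : u ≤ 1)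
    (hv : 0 ≤ v) (hv1 : v ≤ 1) : u + v - 1 ≤ C u v := by
  have := cop_lip_right hC hu hu1 hv hv1 le_rfl
  rw [(hC.1 u ⟨hu, hu1⟩).2.2.1] at this
  linarith

lemma cop_intble {C : ℝ → ℝ → ℝ} (hC : IsCopula C) {u a b : ℝ} (hu : 0 ≤ u) (hu1 : u ≤ 1)
    (ha : 0 ≤ a) (hab : a ≤ b) (hb : b ≤ 1) :
    IntervalIntegrable (fun v => C u v) MeasureTheory.volume a b := by
  apply MonotoneOn.intervalIntegrable
  rw [Set.uIcc_of_le hab]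
  intro x hx y hy hxy
  exact cop_mono_right hC hu hu1 (ha.trans hx.1) hxy (hy.2.trans hb)

lemma cop_inner_intble {C : ℝ → ℝ → ℝ} (hC : IsCopula C) {a b : ℝ}
    (ha : 0 ≤ a) (hab : a ≤ b) (hb : b ≤ 1) :
    IntervalIntegrable (fun u => ∫ v in (0:ℝ)..1, C u v) MeasureTheory.volume a b := by
  apply MonotoneOn.intervalIntegrable
  rw [Set.uIcc_of_le hab]
  intro x hx y hy hxy
  have hx0 := ha.trans hx.1
  have hy1 := hy.2.trans hb
  apply intervalIntegral.integral_mono_on zero_le_one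
    (cop_intble hC hx0 (hxy.trans hy1) le_rfl zero_le_one le_rfl)
    (cop_intble hC (hx0.trans hxy) hy1 le_rfl zero_le_one le_rfl)
  intro v hv
  exact cop_mono_left hC hv.1 hv.2 hx0 hxy hy1

lemma int_lin (a b c e : ℝ) : ∫ v in a..b, (c + e * v) = c * (b - a) + e * (b^2 - a^2) / 2 := by
  rw [intervalIntegral.integral_add (by simp) (Continuous.intervalIntegrable (by fun_prop) _ _)]
  rw [intervalIntegral.integral_const_mul]
  simp; ring

lemma int_quad (a b c e : ℝ) : ∫ u in a..b, (c + e * u + u^2/2) =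
    c * (b - a) + e * (b^2 - a^2) / 2 + (b^3 - a^3) / 6 := by
  rw [intervalIntegral.integral_add (Continuous.intervalIntegrable (by fun_prop) _ _)
    (Continuous.intervalIntegrable (by fun_prop) _ _), int_lin]
  simp [integral_pow]; ring

lemma ge_lin {f : ℝ → ℝ} {a b : ℝ} (hab : a ≤ b)
    (hf : IntervalIntegrable f MeasureTheory.volume a b) (c e : ℝ)
    (h : ∀ v ∈ Set.Icc a b, c + e * v ≤ f v) :
    c * (b - a) + e * (b^2 - a^2) / 2 ≤ ∫ v in a..b, f v := by
  rw [← int_lin]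
  exact intervalIntegral.integral_mono_on hab (Continuous.intervalIntegrable (by fun_prop) _ _) hf h

lemma ge_quad {f : ℝ → ℝ} {a b : ℝ} (hab : a ≤ b)
    (hf : IntervalIntegrable f MeasureTheory.volume a b) (c e : ℝ)
    (h : ∀ v ∈ Set.Icc a b, c + e * v + v^2/2 ≤ f v) :
    c * (b - a) + e * (b^2 - a^2) / 2 + (b^3 - a^3) / 6 ≤ ∫ v in a..b, f v := by
  rw [← int_quad]
  exact intervalIntegral.integral_mono_on hab (Continuous.intervalIntegrable (by fun_prop) _ _) hf h

lemma inner_W {C : ℝ → ℝ → ℝ} (hC : IsCopula C) {u : ℝ} (hu : 0 ≤ u) (hu1 : u ≤ 1) :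
    u^2/2 ≤ ∫ v in (0:ℝ)..1, C u v := by
  have i1 := cop_intble hC hu hu1 (a := 0) (b := 1 - u) le_rfl (by linarith) (by linarith)
  have i2 := cop_intble hC hu hu1 (a := 1 - u) (b := 1) (by linarith) (by linarith) le_rfl
  rw [← intervalIntegral.integral_add_adjacent_intervals i1 i2]
  have h1 := ge_lin (by linarith) i1 0 0 (fun v hv => by
    have := cop_nonneg hC hu hu1 hv.1 (by linarith [hv.2]); linarith)
  have h2 := ge_lin (by linarith) i2 (u - 1) 1 (fun v hv => by
    have := cop_W hC hu hu1 (v := v) (by linarith [hv.1]) hv.2; linarith)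
  nlinarith

lemma inner_d {C : ℝ → ℝ → ℝ} (hC : IsCopula C) {u p q : ℝ} (hu : 0 ≤ u) (hu1 : u ≤ 1)
    (hp : 0 ≤ p) (hp1 : p ≤ 1/2) (hq : 0 ≤ q) (hq1 : q ≤ 1/2) (hpq : q = p - (u - 1/2))
    (hm : p ≤ C u (1/2)) :
    u^2/2 + p * q ≤ ∫ v in (0:ℝ)..1, C u v := by
  have i0 := cop_intble hC hu hu1 (a := 0) (b := 1/2 - p) le_rfl (by linarith) (by linarith)
  have i1 := cop_intble hC hu hu1 (a := 1/2 - p) (b := 1/2) (by linarith) (by linarith)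
    (by linarith)
  have i2 := cop_intble hC hu hu1 (a := 1/2) (b := 1/2 + q) (by linarith) (by linarith)
    (by linarith)
  have i3 := cop_intble hC hu hu1 (a := 1/2 + q) (b := 1) (by linarith) (by linarith) le_rfl
  rw [← intervalIntegral.integral_add_adjacent_intervals ((i0.trans i1).trans i2) i3,
    ← intervalIntegral.integral_add_adjacent_intervals (i0.trans i1) i2,
    ← intervalIntegral.integral_add_adjacent_intervals i0 i1]
  have h0 := ge_lin (by linarith) i0 0 0 (fun v hv => by
    have := cop_nonneg hC hu hu1 hv.1 (by linarith [hv.2]); linarith)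
  have h1 := ge_lin (by linarith) i1 (p - 1/2) 1 (fun v hv => by
    have := cop_lip_right hC hu hu1 (v := v) (w := 1/2) (by linarith [hv.1]) hv.2 (by norm_num)
    linarith)
  have h2 := ge_lin (by linarith) i2 p 0 (fun v hv => by
    have := cop_mono_right hC hu hu1 (v := 1/2) (w := v) (by norm_num) hv.1 (by linarith [hv.2])
    linarith)
  have h3 := ge_lin (by linarith) i3 (u - 1) 1 (fun v hv => by
    have := cop_W hC hu hu1 (v := v) (by linarith [hv.1]) hv.2; linarith)
  subst hpq
  nlinarith

lemma cop_d_le {C : ℝ → ℝ → ℝ} (hC : IsCopula C) : C (1/2) (1/2) ≤ 1/2 := by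
  have := cop_mono_right hC (u := 1/2) (v := 1/2) (w := 1) (by norm_num) (by norm_num)
    (by norm_num) (by norm_num) (by norm_num)
  rwa [(hC.1 (1/2) ⟨by norm_num, by norm_num⟩).2.2.1] at this

lemma cop_key {C : ℝ → ℝ → ℝ} (hC : IsCopula C) :
    1/6 + C (1/2) (1/2) ^ 3 ≤ ∫ u in (0:ℝ)..1, ∫ v in (0:ℝ)..1, C u v := by
  have hd0 : 0 ≤ C (1/2) (1/2) :=
    cop_nonneg hC (by norm_num) (by norm_num) (by norm_num) (by norm_num)
  have hd1 := cop_d_le hC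
  obtain ⟨d, hd⟩ : ∃ d, d = C (1/2) (1/2) := ⟨_, rfl⟩
  rw [← hd] at hd0 hd1 ⊢
  have i0 := cop_inner_intble hC (a := 0) (b := 1/2 - d) le_rfl (by linarith) (by linarith)
  have i1 := cop_inner_intble hC (a := 1/2 - d) (b := 1/2) (by linarith) (by linarith)
    (by linarith)
  have i2 := cop_inner_intble hC (a := 1/2) (b := 1/2 + d) (by linarith) (by linarith)
    (by linarith)
  have i3 := cop_inner_intble hC (a := 1/2 + d) (b := 1) (by linarith) (by linarith) le_rfl
  rw [← intervalIntegral.integral_add_adjacent_intervals ((i0.trans i1).trans i2) i3,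
    ← intervalIntegral.integral_add_adjacent_intervals (i0.trans i1) i2,
    ← intervalIntegral.integral_add_adjacent_intervals i0 i1]
  have h0 := ge_quad (by linarith) i0 0 0 (fun u hu => by
    have := inner_W hC hu.1 (by linarith [hu.2]); linarith)
  have h3 := ge_quad (by linarith) i3 0 0 (fun u hu => by
    have := inner_W hC (u := u) (by linarith [hu.1]) hu.2; linarith)
  have h1 := ge_quad (by linarith) i1 (d * (d - 1/2)) d (fun u hu => by
    obtain ⟨ha, hb⟩ := hu
    have hl := cop_lip_left hC (u := 1/2) (v := u) (w := 1/2) (by norm_num) (by norm_num)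
      (by linarith) hb (by norm_num)
    have := inner_d hC (u := u) (p := d + (u - 1/2)) (q := d) (by linarith) (by linarith)
      (by linarith) (by linarith) (by linarith) (by linarith) (by ring) (by linarith)
    linarith)
  have h2 := ge_quad (by linarith) i2 (d * (d + 1/2)) (-d) (fun u hu => by
    obtain ⟨ha, hb⟩ := hu
    have hl := cop_mono_left hC (u := 1/2) (v := 1/2) (w := u) (by norm_num) (by norm_num)
      (by norm_num) ha (by linarith)
    have := inner_d hC (u := u) (p := d) (q := d - (u - 1/2)) (by linarith) (by linarith)
      (by linarith) (by linarith) (by linarith) (by linarith) (by ring) (by linarith)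
    linarith)
  linarith

lemma cop_upper {C : ℝ → ℝ → ℝ} (hC : IsCopula C) :
    blomqvistBeta C ≤
      (if (1/2 : ℝ) ≤ spearmanRho C then (1 : ℝ)
      else -1 + 2 * (2 * (1 + spearmanRho C) / 3) ^ ((1:ℝ)/3)) := by
  have hd0 : 0 ≤ C (1/2) (1/2) :=
    cop_nonneg hC (by norm_num) (by norm_num) (by norm_num) (by norm_num)
  have hd1 := cop_d_le hC
  have hk := cop_key hC
  split_ifs with h
  · unfold blomqvistBeta; linarith
  · have h3 : (2 * C (1/2) (1/2)) ^ 3 ≤ 2 * (1 + spearmanRho C) / 3 := by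
      unfold spearmanRho; linarith
    have h4 : (((2 * C (1/2) (1/2)) ^ 3 : ℝ)) ^ ((1:ℝ)/3) = 2 * C (1/2) (1/2) := by
      rw [← Real.rpow_natCast, ← Real.rpow_mul (by linarith)]; norm_num
    have h5 := Real.rpow_le_rpow (by positivity) h3 (by norm_num : (0:ℝ) ≤ 1/3)
    rw [h4] at h5
    unfold blomqvistBeta; linarith

lemma cop_flip {C : ℝ → ℝ → ℝ} (hC : IsCopula C) : IsCopula (fun u v => u - C u (1 - v)) := by
  refine ⟨fun u hu => ?_, fun u₁ u₂ v₁ v₂ h1 h2 h3 h4 h5 h6 => ?_⟩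
  · have a := hC.1 u hu
    have b := hC.1 (1 - u) ⟨by linarith [hu.2], by linarith [hu.1]⟩
    simp [a, b]
  · have := hC.2 u₁ u₂ (1 - v₂) (1 - v₁) h1 h2 h3 (by linarith) (by linarith) (by linarith)
    dsimp only
    linarith

lemma rho_flip {C : ℝ → ℝ → ℝ} (hC : IsCopula C) :
    spearmanRho (fun u v => u - C u (1 - v)) = - spearmanRho C := by
  have h : ∫ u in (0:ℝ)..1, ∫ v in (0:ℝ)..1, (u - C u (1 - v)) =
      ∫ u in (0:ℝ)..1, (u - ∫ v in (0:ℝ)..1, C u v) := by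
    apply intervalIntegral.integral_congr
    intro u hu
    rw [Set.uIcc_of_le zero_le_one] at hu
    have h2 := intervalIntegral.integral_comp_sub_left (a := 0) (b := 1) (fun v => u - C u v) 1
    simp only [sub_self, sub_zero] at h2
    dsimp only
    rw [h2, intervalIntegral.integral_sub (by simp)
      (cop_intble hC hu.1 hu.2 le_rfl zero_le_one le_rfl)]
    simp
  unfold spearmanRho
  rw [h, intervalIntegral.integral_sub (Continuous.intervalIntegrable (by fun_prop) _ _)
    (cop_inner_intble hC le_rfl zero_le_one le_rfl)]
  simp; ring

/-- Bounds for Blomqvist's beta of a copula in terms of its Spearman's rho. -/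
theorem beta_bounds_of_rho (C : ℝ → ℝ → ℝ) (hC : IsCopula C) :
    (if spearmanRho C ≤ -(1/2) then (-1 : ℝ)
      else 1 - 2 * (2 * (1 - spearmanRho C) / 3) ^ ((1:ℝ)/3)) ≤ blomqvistBeta C ∧
    blomqvistBeta C ≤
      (if (1/2 : ℝ) ≤ spearmanRho C then (1 : ℝ)
      else -1 + 2 * (2 * (1 + spearmanRho C) / 3) ^ ((1:ℝ)/3)) := by
  refine ⟨?_, cop_upper hC⟩
  have h := cop_upper (cop_flip hC)
  rw [rho_flip hC] at h
  have hb : blomqvistBeta (fun u v => u - C u (1 - v)) = - blomqvistBeta C := by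
    unfold blomqvistBeta
    norm_num
    ring
  rw [hb, ← sub_eq_add_neg] at h
  split_ifs at h ⊢ <;> linarith
end

section
/- Let t ∈ [−1,1]. Then Kendall's tau of the lower bound copula B̲_t equals τ(B̲_t) = (1+t)²/4 − 1; explicitly, 4·∫₀¹ B̲_t(u, S_t(u)) du − 1 = (1+t)²/4 − 1, where S_t is the support map of B̲_t. -/
/-- The support map `S_t` of `B̲_t`: `S_t(u) = 1−u` for `u ∈ [0,(1−t)/4] ∪ [(3+t)/4,1]`,
`S_t(u) = (3−t)/4 − u` for `u ∈ ((1−t)/4, 1/2]`, and `S_t(u) = (5+t)/4 − u` for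
`u ∈ (1/2, (3+t)/4)`. -/
noncomputable def Smap (t u : ℝ) : ℝ :=
  if u ≤ (1 - t) / 4 then 1 - u
  else if u ≤ 1 / 2 then (3 - t) / 4 - u
  else if u < (3 + t) / 4 then (5 + t) / 4 - u
  else 1 - u

theorem Blower_Smap_eq (t : ℝ) (h1 : -1 ≤ t) (h2 : t ≤ 1) (u : ℝ) :
    Blower t u (Smap t u) =
      (Set.Ioo (1 / 2 : ℝ) ((3 + t) / 4)).indicator (fun _ => (1 + t) / 4) u := by
  by_cases hu : u ∈ Set.Ioo (1 / 2 : ℝ) ((3 + t) / 4)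
  · rw [Set.indicator_of_mem hu]
    obtain ⟨ha, hb⟩ := hu
    unfold Blower Smap
    rw [if_neg (by linarith), if_neg (by linarith), if_pos hb,
      max_eq_right (by linarith : 1 / 2 - u ≤ 0),
      max_eq_right (by linarith : 1 / 2 - ((5 + t) / 4 - u) ≤ 0),
      max_eq_right (by linarith : 0 ≤ u + ((5 + t) / 4 - u) - 1), max_eq_left (by linarith)]
    ring
  · rw [Set.indicator_of_notMem hu]
    unfold Blower
    refine le_antisymm ?_ (le_trans (le_max_left _ _) (le_max_left _ _))
    have e1 := le_max_left (1 / 2 - u) 0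
    have e2 := le_max_right (1 / 2 - u) 0
    have e3 := le_max_left (1 / 2 - Smap t u) 0
    have e4 := le_max_right (1 / 2 - Smap t u) 0
    have key : (Smap t u = 1 - u ∧ (u ≤ (1 - t) / 4 ∨ (3 + t) / 4 ≤ u)) ∨
        Smap t u = (3 - t) / 4 - u := by
      unfold Smap
      split_ifs with c1 c2 c3
      · exact Or.inl ⟨rfl, Or.inl c1⟩
      · exact Or.inr rfl
      · exact absurd ⟨not_le.mp c2, c3⟩ hu
      · exact Or.inl ⟨rfl, Or.inr (not_lt.mp c3)⟩
    refine max_le (max_le le_rfl ?_) ?_ <;> rcases key with ⟨k, k' | k'⟩ | k <;> linarith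

/-- Kendall's tau of the lower bound copula `B̲_t` equals `(1+t)²/4 − 1`. -/
theorem tau_Blower (t : ℝ) (ht : t ∈ Set.Icc (-1 : ℝ) 1) :
    4 * (∫ u in (0:ℝ)..1, Blower t u (Smap t u)) - 1 = (1 + t) ^ 2 / 4 - 1 := by
  obtain ⟨h1, h2⟩ := ht
  have hs : Set.Ioc (0:ℝ) 1 ∩ Set.Ioo (1 / 2) ((3 + t) / 4) = Set.Ioo (1 / 2) ((3 + t) / 4) :=
    Set.inter_eq_right.mpr (fun x hx => ⟨by linarith [hx.1], by linarith [hx.2]⟩)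
  simp_rw [Blower_Smap_eq t h1 h2]
  rw [intervalIntegral.integral_of_le zero_le_one,
    MeasureTheory.setIntegral_indicator measurableSet_Ioo,
    MeasureTheory.setIntegral_const,
    hs,
    Real.volume_real_Ioo_of_le (by linarith), smul_eq_mul]
  ring
end

section
/- Let t ∈ [−1,1]. Then Kendall's tau of the upper bound copula B̄_t equals τ(B̄_t) = 1 − (1−t)²/4; explicitly, 4·∫₀¹ B̄_t(u, T_t(u)) du − 1 = 1 − (1−t)²/4, where T_t is the support map of B̄_t. -/
/-- The support map `T_t` of `B̄_t`: `T_t(u) = u` for `u ∈ [0,(1+t)/4] ∪ [(3−t)/4,1]`,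
`T_t(u) = u + (1−t)/4` for `u ∈ ((1+t)/4, 1/2]`, and `T_t(u) = u − (1−t)/4` for
`u ∈ (1/2, (3−t)/4)`. -/
noncomputable def Tmap (t u : ℝ) : ℝ :=
  if u ≤ (1 + t) / 4 then u
  else if u ≤ 1 / 2 then u + (1 - t) / 4
  else if u < (3 - t) / 4 then u - (1 - t) / 4
  else u

theorem piece_aux (f g : ℝ → ℝ) (a b : ℝ) (hab : a ≤ b) (hg : Continuous g)
    (h : ∀ x, a < x → x < b → f x = g x) :
    IntervalIntegrable f MeasureTheory.volume a b ∧ ∫ x in a..b, f x = ∫ x in a..b, g x := by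
  have hE : Set.EqOn g f (Set.Ioo a b) := fun x hx => (h x hx.1 hx.2).symm
  constructor
  · rw [intervalIntegrable_iff_integrableOn_Ioo_of_le hab]
    have := (intervalIntegrable_iff_integrableOn_Ioo_of_le hab).1
      (hg.intervalIntegrable (μ := MeasureTheory.volume) a b)
    exact this.congr_fun hE measurableSet_Ioo
  · rw [intervalIntegral.integral_of_le hab, intervalIntegral.integral_of_le hab,
      MeasureTheory.integral_Ioc_eq_integral_Ioo, MeasureTheory.integral_Ioc_eq_integral_Ioo]
    exact (MeasureTheory.setIntegral_congr_fun measurableSet_Ioo hE).symm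

/-- Kendall's tau of the upper bound copula `B̄_t` equals `1 − (1−t)²/4`. -/
theorem tau_Bupper (t : ℝ) (ht : t ∈ Set.Icc (-1 : ℝ) 1) :
    4 * (∫ u in (0:ℝ)..1, Bupper t u (Tmap t u)) - 1 = 1 - (1 - t) ^ 2 / 4 := by
  obtain ⟨h1, h2⟩ := ht
  obtain ⟨i1, e1⟩ := piece_aux (fun u => Bupper t u (Tmap t u)) (fun u => u) 0 (1/2)
    (by norm_num) continuous_id (by
      intro x hx hx'
      simp only [Bupper, Tmap]
      grind)
  obtain ⟨i2, e2⟩ := piece_aux (fun u => Bupper t u (Tmap t u)) (fun u => u - (1 - t) / 4)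
    (1/2) ((3 - t) / 4) (by linarith) (by fun_prop) (by
      intro x hx hx'
      simp only [Bupper, Tmap]
      grind)
  obtain ⟨i3, e3⟩ := piece_aux (fun u => Bupper t u (Tmap t u)) (fun u => u)
    ((3 - t) / 4) 1 (by linarith) continuous_id (by
      intro x hx hx'
      simp only [Bupper, Tmap]
      grind)
  rw [← intervalIntegral.integral_add_adjacent_intervals (i1.trans i2) i3,
    ← intervalIntegral.integral_add_adjacent_intervals i1 i2, e1, e2, e3,
    intervalIntegral.integral_sub
      (f := fun x : ℝ => x) (g := fun _ => (1 - t) / 4)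
      (continuous_id.intervalIntegrable _ _)
      (continuous_const.intervalIntegrable _ _)]
  simp only [integral_id, intervalIntegral.integral_const, smul_eq_mul]
  ring
end

section
/- Let C be a copula and let μ be a probability measure on [0,1]² satisfying μ([0,u]×[0,v]) = C(u,v) for all u,v ∈ [0,1] (the measure induced by C). Let τ = τ(C) = 4·∫_{[0,1]²} C dμ − 1 and β(C) = 4·C(1/2,1/2) − 1. Then β(C) is bounded below by −1 if τ ≤ 0 and by 1 − 2·√(1−τ) if τ > 0, and β(C) is bounded above by 1 if τ ≥ 0 and by −1 + 2·√(1+τ) if τ < 0. -/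
open MeasureTheory

lemma copula_box (C : ℝ → ℝ → ℝ) (hC : IsCopula C) (u v : ℝ) (hu : u ∈ Set.Icc (0:ℝ) 1)
    (hv : v ∈ Set.Icc (0:ℝ) 1) : 0 ≤ C u v := by
  have h := hC.2 0 u 0 v le_rfl hu.1 hu.2 le_rfl hv.1 hv.2
  have h0 := hC.1 0 (by norm_num)
  have h1 := hC.1 u hu
  have h2 := hC.1 v hv
  linarith [h0.1, h1.1, h2.2.1]

lemma vline_null (C : ℝ → ℝ → ℝ) (hC : IsCopula C)
    (μ : Measure (ℝ × ℝ)) [IsProbabilityMeasure μ]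
    (hr : ∀ u ∈ Set.Icc (0:ℝ) 1, ∀ v ∈ Set.Icc (0:ℝ) 1,
      μ.real (Set.Icc 0 u ×ˢ Set.Icc 0 v) = C u v) (a : ℝ) :
    μ.real {q : ℝ × ℝ | q.1 = a} = 0 := by
  have hS : μ.real (Set.Icc (0:ℝ) 1 ×ˢ Set.Icc (0:ℝ) 1) = 1 := by
    rw [hr 1 (by norm_num) 1 (by norm_num)]
    exact (hC.1 1 (by norm_num)).2.2.1
  have hSc : μ.real (Set.Icc (0:ℝ) 1 ×ˢ Set.Icc (0:ℝ) 1)ᶜ = 0 := by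
    rw [measureReal_compl (measurableSet_Icc.prod measurableSet_Icc), hS]; simp
  refine le_antisymm ?_ measureReal_nonneg
  by_cases ha : a ∈ Set.Icc (0:ℝ) 1
  · rcases eq_or_lt_of_le ha.1 with h0 | h0
    · have hle : μ.real {q : ℝ × ℝ | q.1 = a} ≤
          μ.real ((Set.Icc (0:ℝ) 0 ×ˢ Set.Icc (0:ℝ) 1) ∪
            (Set.Icc (0:ℝ) 1 ×ˢ Set.Icc (0:ℝ) 1)ᶜ) := by
        refine measureReal_mono ?_ (measure_ne_top _ _)
        · rintro ⟨x, y⟩ hx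
          simp only [Set.mem_ofPred_eq, Set.mem_union, Set.mem_compl_iff, Set.mem_prod,
            Set.mem_Icc] at *
          grind
      have h2 := measureReal_union_le (μ := μ) (Set.Icc (0:ℝ) 0 ×ˢ Set.Icc (0:ℝ) 1)
            (Set.Icc (0:ℝ) 1 ×ˢ Set.Icc (0:ℝ) 1)ᶜ
      rw [hSc, hr 0 (by norm_num) 1 (by norm_num), (hC.1 0 (by norm_num)).2.2.1] at h2
      linarith
    · apply le_of_forall_pos_le_add
      intro e he
      set b := max 0 (a - e) with hb
      have hb0 : 0 ≤ b := le_max_left _ _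
      have hb1 : a - e ≤ b := le_max_right _ _
      have hba : b < a := max_lt h0 (by linarith)
      have hbI : b ∈ Set.Icc (0:ℝ) 1 := ⟨hb0, by linarith [ha.2]⟩
      have hle : μ.real {q : ℝ × ℝ | q.1 = a} ≤
          μ.real (((Set.Icc (0:ℝ) a ×ˢ Set.Icc (0:ℝ) 1) \ (Set.Icc (0:ℝ) b ×ˢ Set.Icc (0:ℝ) 1)) ∪
            (Set.Icc (0:ℝ) 1 ×ˢ Set.Icc (0:ℝ) 1)ᶜ) := by
        refine measureReal_mono ?_ (measure_ne_top _ _)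
        · rintro ⟨x, y⟩ hx
          simp only [Set.mem_ofPred_eq, Set.mem_union, Set.mem_compl_iff, Set.mem_prod,
            Set.mem_Icc, Set.mem_sdiff] at *
          grind
      have h2 := measureReal_union_le (μ := μ)
            ((Set.Icc (0:ℝ) a ×ˢ Set.Icc (0:ℝ) 1) \ (Set.Icc (0:ℝ) b ×ˢ Set.Icc (0:ℝ) 1))
            (Set.Icc (0:ℝ) 1 ×ˢ Set.Icc (0:ℝ) 1)ᶜ
      rw [measureReal_sdiff (Set.prod_mono (Set.Icc_subset_Icc_right hba.le) le_rfl)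
        (measurableSet_Icc.prod measurableSet_Icc), hSc, hr a ha 1 (by norm_num),
        hr b hbI 1 (by norm_num), (hC.1 a ha).2.2.1, (hC.1 b hbI).2.2.1] at h2
      linarith
  · rw [← hSc]
    refine measureReal_mono ?_ (measure_ne_top _ _)
    rintro ⟨x, y⟩ hx
    simp only [Set.mem_ofPred_eq, Set.mem_compl_iff, Set.mem_prod] at *
    grind

lemma tau_key (C : ℝ → ℝ → ℝ) (hC : IsCopula C)
    (μ : Measure (ℝ × ℝ)) [IsProbabilityMeasure μ]
    (hμ : ∀ u ∈ Set.Icc (0:ℝ) 1, ∀ v ∈ Set.Icc (0:ℝ) 1,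
      μ (Set.Icc 0 u ×ˢ Set.Icc 0 v) = ENNReal.ofReal (C u v)) :
    C (1/2) (1/2) ^ 2 ≤ (∫ p in (Set.Icc (0:ℝ) 1 ×ˢ Set.Icc (0:ℝ) 1), C p.1 p.2 ∂μ) ∧
    (∫ p in (Set.Icc (0:ℝ) 1 ×ˢ Set.Icc (0:ℝ) 1), C p.1 p.2 ∂μ) ≤
      1 / 2 - (1 / 2 - C (1/2) (1/2)) ^ 2 := by
  have hr : ∀ u ∈ Set.Icc (0:ℝ) 1, ∀ v ∈ Set.Icc (0:ℝ) 1,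
      μ.real (Set.Icc 0 u ×ˢ Set.Icc 0 v) = C u v := by
    intro u hu v hv
    rw [measureReal_def, hμ u hu v hv, ENNReal.toReal_ofReal (copula_box C hC u v hu hv)]
  have m1 : (1:ℝ) ∈ Set.Icc (0:ℝ) 1 := by norm_num
  have mh : (1/2:ℝ) ∈ Set.Icc (0:ℝ) 1 := by norm_num
  have mS : ∀ u v : ℝ, MeasurableSet (Set.Icc (0:ℝ) u ×ˢ Set.Icc (0:ℝ) v) :=
    fun u v => measurableSet_Icc.prod measurableSet_Icc
  have hS : μ.real (Set.Icc (0:ℝ) 1 ×ˢ Set.Icc (0:ℝ) 1) = 1 := by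
    rw [hr 1 m1 1 m1]
    exact (hC.1 1 m1).2.2.1
  have hSc : μ.real (Set.Icc (0:ℝ) 1 ×ˢ Set.Icc (0:ℝ) 1)ᶜ = 0 := by
    rw [measureReal_compl (mS 1 1), hS]; simp
  set d := C (1/2) (1/2) with hd
  have hd0 : 0 ≤ d := copula_box C hC _ _ mh mh
  let SW : Set (ℝ × ℝ) := Set.Icc 0 (1/2) ×ˢ Set.Icc 0 (1/2)
  let W : Set (ℝ × ℝ) := Set.Icc 0 (1/2) ×ˢ Set.Icc 0 1
  let Sb : Set (ℝ × ℝ) := Set.Icc 0 1 ×ˢ Set.Icc 0 (1/2)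
  have hSW : μ.real SW = d := hr _ mh _ mh
  have hW : μ.real W = 1/2 := by rw [hr _ mh _ m1]; exact (hC.1 _ mh).2.2.1
  have hSb : μ.real Sb = 1/2 := by rw [hr _ m1 _ mh]; exact (hC.1 _ mh).2.2.2
  have sW : SW ⊆ W := Set.prod_mono le_rfl (Set.Icc_subset_Icc_right (by norm_num))
  have sSb : SW ⊆ Sb := Set.prod_mono (Set.Icc_subset_Icc_right (by norm_num)) le_rfl
  have hNW : μ.real (W \ SW) = 1/2 - d := by rw [measureReal_sdiff sW (mS _ _), hW, hSW]
  have hSE : μ.real (Sb \ SW) = 1/2 - d := by rw [measureReal_sdiff sSb (mS _ _), hSb, hSW]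
  let NE : Set (ℝ × ℝ) := (Set.Icc (0:ℝ) 1 ×ˢ Set.Icc (0:ℝ) 1) \ (W ∪ (Sb \ SW))
  have hNE : μ.real NE = d := by
    have hsub : W ∪ (Sb \ SW) ⊆ (Set.Icc (0:ℝ) 1 ×ˢ Set.Icc (0:ℝ) 1) := by
      rintro ⟨x, y⟩ hx
      simp only [W, Sb, SW, Set.mem_union, Set.mem_prod, Set.mem_Icc, Set.mem_sdiff] at *
      grind
    have hdis : Disjoint W (Sb \ SW) := by
      rw [Set.disjoint_left]
      rintro ⟨x, y⟩ hx
      simp only [W, Sb, SW, Set.mem_prod, Set.mem_Icc, Set.mem_sdiff] at *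
      grind
    rw [measureReal_sdiff hsub ((mS _ _).union ((mS _ _).diff (mS _ _))), hS,
      measureReal_union hdis ((mS _ _).diff (mS _ _)), hW, hSE]
    ring
  let A : Set ((ℝ × ℝ) × (ℝ × ℝ)) := {z | z.2 ∈ Set.Icc 0 z.1}
  have mA : MeasurableSet A := by
    have : A = {z | (0 ≤ z.2.1 ∧ 0 ≤ z.2.2) ∧ (z.2.1 ≤ z.1.1 ∧ z.2.2 ≤ z.1.2)} := by
      ext z; simp [A, Prod.le_def]
    rw [this]
    measurability
  have hint : (∫ p in (Set.Icc (0:ℝ) 1 ×ˢ Set.Icc (0:ℝ) 1), C p.1 p.2 ∂μ)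
      = (μ.prod μ).real A := by
    have e1 : (∫ p in (Set.Icc (0:ℝ) 1 ×ˢ Set.Icc (0:ℝ) 1), C p.1 p.2 ∂μ)
        = ∫ p in (Set.Icc (0:ℝ) 1 ×ˢ Set.Icc (0:ℝ) 1), (μ (Prod.mk p ⁻¹' A)).toReal ∂μ := by
      apply setIntegral_congr_fun (mS 1 1)
      rintro ⟨x, y⟩ hp
      have : Prod.mk (x, y) ⁻¹' A = Set.Icc 0 x ×ˢ Set.Icc 0 y := by
        ext q; simp [A, Prod.le_def]
      simp only [this]
      exact (hr x hp.1 y hp.2).symm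
    have e2 : μ.restrict (Set.Icc (0:ℝ) 1 ×ˢ Set.Icc (0:ℝ) 1) = μ := by
      apply Measure.restrict_eq_self_of_ae_mem
      rw [ae_iff]
      exact (measureReal_eq_zero_iff).1 hSc
    rw [e1, e2, integral_toReal (measurable_measure_prodMk_left mA).aemeasurable
      (Filter.Eventually.of_forall fun _ => measure_lt_top _ _), measureReal_def,
      Measure.prod_apply mA]
  rw [hint]
  constructor
  · have : (μ.prod μ).real (NE ×ˢ SW) ≤ (μ.prod μ).real A := by
      refine measureReal_mono ?_ (measure_ne_top _ _)
      rintro ⟨⟨x, y⟩, ⟨z, w⟩⟩ hx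
      simp only [NE, A, W, Sb, SW, Set.mem_union, Set.mem_prod, Set.mem_Icc, Set.mem_sdiff,
        Set.mem_ofPred_eq, Prod.le_def, Prod.fst_zero, Prod.snd_zero] at *
      grind
    rw [measureReal_prod_prod, hNE, hSW] at this
    nlinarith
  · let T : Set ((ℝ × ℝ) × (ℝ × ℝ)) := {z | z.2.1 = z.1.1}
    have mT : MeasurableSet T := by
      exact measurableSet_eq_fun (by fun_prop) (by fun_prop)
    have hT : (μ.prod μ) T = 0 := by
      rw [Measure.measure_prod_null mT]
      refine Filter.Eventually.of_forall fun p => ?_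
      exact (measureReal_eq_zero_iff).1 (vline_null C hC μ hr p.1)
    have hA0 : (μ.prod μ).real (A \ T) = (μ.prod μ).real A := by
      rw [measureReal_def, measureReal_def, measure_sdiff_null hT]
    have mA0 : MeasurableSet (A \ T) := mA.diff mT
    have hsw : (μ.prod μ).real (Prod.swap ⁻¹' (A \ T)) = (μ.prod μ).real A := by
      rw [← hA0, measureReal_def, measureReal_def,
        Measure.measurePreserving_swap.measure_preimage mA0.nullMeasurableSet]
    have mNW : MeasurableSet (W \ SW) := (mS _ _).diff (mS _ _)
    have mSE : MeasurableSet (Sb \ SW) := (mS _ _).diff (mS _ _)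
    have d1 : Disjoint (A \ T) (Prod.swap ⁻¹' (A \ T)) := by
      rw [Set.disjoint_left]
      rintro ⟨⟨x, y⟩, ⟨z, w⟩⟩ hx
      simp only [T, A, Set.mem_preimage, Prod.swap_prod_mk, Set.mem_Icc, Set.mem_sdiff,
        Set.mem_ofPred_eq, Prod.le_def, Prod.fst_zero, Prod.snd_zero] at *
      grind
    have d2 : Disjoint ((W \ SW) ×ˢ (Sb \ SW)) ((Sb \ SW) ×ˢ (W \ SW)) := by
      rw [Set.disjoint_left]
      rintro ⟨⟨x, y⟩, ⟨z, w⟩⟩ hx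
      simp only [W, Sb, SW, Set.mem_prod, Set.mem_Icc, Set.mem_sdiff] at *
      grind
    have d3 : Disjoint ((A \ T) ∪ (Prod.swap ⁻¹' (A \ T)))
        (((W \ SW) ×ˢ (Sb \ SW)) ∪ ((Sb \ SW) ×ˢ (W \ SW))) := by
      rw [Set.disjoint_left]
      rintro ⟨⟨x, y⟩, ⟨z, w⟩⟩ hx
      simp only [W, Sb, SW, T, A, Set.mem_union, Set.mem_preimage, Prod.swap_prod_mk,
        Set.mem_prod, Set.mem_Icc, Set.mem_sdiff,
        Set.mem_ofPred_eq, Prod.le_def, Prod.fst_zero, Prod.snd_zero] at *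
      grind
    have hle : (μ.prod μ).real (((A \ T) ∪ (Prod.swap ⁻¹' (A \ T))) ∪
        (((W \ SW) ×ˢ (Sb \ SW)) ∪ ((Sb \ SW) ×ˢ (W \ SW)))) ≤ 1 := measureReal_le_one
    rw [measureReal_union d3 ((mNW.prod mSE).union (mSE.prod mNW)),
      measureReal_union d1 (measurable_swap mA0), measureReal_union d2 (mSE.prod mNW),
      measureReal_prod_prod, measureReal_prod_prod, hsw, hA0, hNW, hSE] at hle
    nlinarith

/-- Bounds for Blomqvist's beta of a copula in terms of its Kendall's tau
`τ(C) = 4·∫_{[0,1]²} C dμ − 1`, where `μ` is the probability measure induced by `C`. -/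
theorem beta_bounds_of_tau (C : ℝ → ℝ → ℝ) (hC : IsCopula C)
    (μ : Measure (ℝ × ℝ)) [IsProbabilityMeasure μ]
    (hμ : ∀ u ∈ Set.Icc (0:ℝ) 1, ∀ v ∈ Set.Icc (0:ℝ) 1,
      μ (Set.Icc 0 u ×ˢ Set.Icc 0 v) = ENNReal.ofReal (C u v))
    (τ : ℝ)
    (hτ : τ = 4 * (∫ p in (Set.Icc (0:ℝ) 1 ×ˢ Set.Icc (0:ℝ) 1), C p.1 p.2 ∂μ) - 1) :
    (if τ ≤ 0 then (-1 : ℝ) else 1 - 2 * Real.sqrt (1 - τ)) ≤ blomqvistBeta C ∧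
    blomqvistBeta C ≤ (if 0 ≤ τ then (1 : ℝ) else -1 + 2 * Real.sqrt (1 + τ)) := by
  have key := tau_key C hC μ hμ
  have mh : (1/2:ℝ) ∈ Set.Icc (0:ℝ) 1 := by norm_num
  have hd0 : 0 ≤ C (1/2) (1/2) := copula_box C hC _ _ mh mh
  have hd1 : C (1/2) (1/2) ≤ 1/2 := by
    have h := hC.2 0 (1/2) (1/2) 1 le_rfl (by norm_num) (by norm_num) (by norm_num)
      (by norm_num) le_rfl
    have h0 := (hC.1 (1/2) mh).2.1
    have h1 := (hC.1 0 (by norm_num)).2.2.1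
    have h2 := (hC.1 (1/2) mh).2.2.1
    linarith
  generalize (∫ p in (Set.Icc (0:ℝ) 1 ×ˢ Set.Icc (0:ℝ) 1), C p.1 p.2 ∂μ) = I at *
  unfold blomqvistBeta
  generalize C (1/2) (1/2) = d at *
  constructor
  · split_ifs
    · linarith
    · have : 1 - 2 * d ≤ Real.sqrt (1 - τ) := Real.le_sqrt_of_sq_le (by nlinarith)
      linarith
  · split_ifs
    · linarith
    · have : 2 * d ≤ Real.sqrt (1 + τ) := Real.le_sqrt_of_sq_le (by nlinarith)
      linarith
end

section
/- Let t ∈ [−1,1]. Then Spearman's footrule of the lower bound copula B̲_t equals φ(B̲_t) = (3/16)(1+t)² − 1/2; explicitly, 6·∫₀¹ B̲_t(u,u) du − 2 = (3/16)(1+t)² − 1/2. -/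
/-- Spearman's footrule of the lower bound copula `B̲_t` equals `(3/16)(1+t)² − 1/2`. -/
theorem footrule_Blower (t : ℝ) (ht : t ∈ Set.Icc (-1 : ℝ) 1) :
    6 * (∫ u in (0:ℝ)..1, Blower t u u) - 2 = 3 / 16 * (1 + t) ^ 2 - 1 / 2 := by
  obtain ⟨h1, h2⟩ := ht
  have hc : Continuous (fun u : ℝ => Blower t u u) := by
    unfold Blower
    fun_prop
  have hi : ∀ a b : ℝ, IntervalIntegrable (fun u : ℝ => Blower t u u) MeasureTheory.volume a b :=
    fun a b => hc.intervalIntegrable a b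
  have hlin : ∀ p q a b : ℝ, a ≤ b → (∀ u ∈ Set.Icc a b, Blower t u u = p * u + q) →
      ∫ u in a..b, Blower t u u = p * ((b ^ 2 - a ^ 2) / 2) + q * (b - a) := by
    intro p q a b hab h
    have e : ∫ u in a..b, Blower t u u = ∫ u in a..b, (p * u + q) := by
      apply intervalIntegral.integral_congr
      intro u hu
      rw [Set.uIcc_of_le hab] at hu
      exact h u hu
    rw [e, intervalIntegral.integral_add
      (Continuous.intervalIntegrable (by fun_prop) a b)
      (continuous_const.intervalIntegrable a b),
      intervalIntegral.integral_const_mul, integral_id, intervalIntegral.integral_const,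
      smul_eq_mul]
    ring
  have e1 := hlin 0 0 0 ((1 - (1 + t) / 4) / 2) (by linarith) (by
    rintro u ⟨ha, hb⟩
    unfold Blower
    rw [max_eq_left (a := 1 / 2 - u) (by linarith), max_eq_left (a := (0:ℝ)) (by linarith),
      max_eq_left (by linarith)]
    ring)
  have e2 := hlin 2 ((1 + t) / 4 - 1) ((1 - (1 + t) / 4) / 2) (1 / 2) (by linarith) (by
    rintro u ⟨ha, hb⟩
    unfold Blower
    rw [max_eq_left (a := 1 / 2 - u) (by linarith), max_eq_left (a := (0:ℝ)) (by linarith),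
      max_eq_right (by linarith)]
    ring)
  have e3 := hlin 0 ((1 + t) / 4) (1 / 2) ((1 + (1 + t) / 4) / 2) (by linarith) (by
    rintro u ⟨ha, hb⟩
    unfold Blower
    rw [max_eq_right (a := 1 / 2 - u) (by linarith), max_eq_right (a := (0:ℝ)) (by linarith),
      max_eq_right (by linarith)]
    ring)
  have e4 := hlin 2 (-1) ((1 + (1 + t) / 4) / 2) 1 (by linarith) (by
    rintro u ⟨ha, hb⟩
    unfold Blower
    rw [max_eq_right (a := 1 / 2 - u) (by linarith), max_eq_right (a := (0:ℝ)) (by linarith),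
      max_eq_left (by linarith)]
    ring)
  rw [← intervalIntegral.integral_add_adjacent_intervals (hi 0 (1 / 2)) (hi (1 / 2) 1),
    ← intervalIntegral.integral_add_adjacent_intervals (hi 0 ((1 - (1 + t) / 4) / 2)) (hi _ (1 / 2)),
    ← intervalIntegral.integral_add_adjacent_intervals (hi (1 / 2) ((1 + (1 + t) / 4) / 2)) (hi _ 1),
    e1, e2, e3, e4]
  ring
end

section
/- Let t ∈ [−1,1]. Then Spearman's footrule of the upper bound copula B̄_t equals φ(B̄_t) = 1 − (3/8)(1−t)²; explicitly, 6·∫₀¹ B̄_t(u,u) du − 2 = 1 − (3/8)(1−t)². -/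
/-- Spearman's footrule of the upper bound copula `B̄_t` equals `1 − (3/8)(1−t)²`. -/
theorem footrule_Bupper (t : ℝ) (ht : t ∈ Set.Icc (-1 : ℝ) 1) :
    6 * (∫ u in (0:ℝ)..1, Bupper t u u) - 2 = 1 - 3 / 8 * (1 - t) ^ 2 := by
  obtain ⟨h1, h2⟩ := ht
  have hc : Continuous fun u => Bupper t u u := by
    unfold Bupper
    fun_prop
  have hi : ∀ a b : ℝ, IntervalIntegrable (fun u => Bupper t u u) MeasureTheory.volume a b :=
    fun a b => hc.intervalIntegrable a b
  have e1 : ∫ u in (0:ℝ)..((1 + t) / 4), Bupper t u u = ∫ u in (0:ℝ)..((1 + t) / 4), u := by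
    apply intervalIntegral.integral_congr
    intro u hu
    rw [Set.uIcc_of_le (by linarith)] at hu
    obtain ⟨h3, h4⟩ := hu
    simp only [Bupper, min_self]
    rw [max_eq_right (by linarith), min_eq_left (by linarith)]
  have e2 : ∫ u in ((1 + t) / 4)..(1 / 2), Bupper t u u
      = ∫ u in ((1 + t) / 4)..(1 / 2), (1 + t) / 4 := by
    apply intervalIntegral.integral_congr
    intro u hu
    rw [Set.uIcc_of_le (by linarith)] at hu
    obtain ⟨h3, h4⟩ := hu
    simp only [Bupper, min_self]
    rw [max_eq_right (by linarith), min_eq_right (by linarith)]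
    ring
  have e3 : ∫ u in (1 / 2)..(1 - (1 + t) / 4), Bupper t u u
      = ∫ u in (1 / 2)..(1 - (1 + t) / 4), (((1 + t) / 4 - 1) + 2 * u) := by
    apply intervalIntegral.integral_congr
    intro u hu
    rw [Set.uIcc_of_le (by linarith)] at hu
    obtain ⟨h3, h4⟩ := hu
    simp only [Bupper, min_self]
    rw [max_eq_left (by linarith), min_eq_right (by linarith)]
    ring
  have e4 : ∫ u in (1 - (1 + t) / 4)..1, Bupper t u u = ∫ u in (1 - (1 + t) / 4)..1, u := by
    apply intervalIntegral.integral_congr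
    intro u hu
    rw [Set.uIcc_of_le (by linarith)] at hu
    obtain ⟨h3, h4⟩ := hu
    simp only [Bupper, min_self]
    rw [max_eq_left (by linarith), min_eq_left (by linarith)]
  rw [← intervalIntegral.integral_add_adjacent_intervals (hi 0 ((1 + t) / 4)) (hi _ 1),
    ← intervalIntegral.integral_add_adjacent_intervals (hi ((1 + t) / 4) (1 / 2)) (hi _ 1),
    ← intervalIntegral.integral_add_adjacent_intervals (hi (1 / 2) (1 - (1 + t) / 4)) (hi _ 1),
    e1, e2, e3, e4, intervalIntegral.integral_add (by simp)
      ((by fun_prop : Continuous fun u : ℝ => 2 * u).intervalIntegrable _ _),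
    intervalIntegral.integral_const_mul]
  simp only [integral_id, intervalIntegral.integral_const, smul_eq_mul]
  ring
end

section
/- Let t ∈ [−1,1]. Then Gini's gamma of the lower bound copula B̲_t equals γ(B̲_t) = (3/8)(1+t)² − 1; explicitly, 4·∫₀¹ ( B̲_t(u,u) + B̲_t(u,1−u) ) du − 2 = (3/8)(1+t)² − 1. -/
lemma piece_int (f : ℝ → ℝ) (p q x y : ℝ) (hxy : x ≤ y)
    (h : ∀ u, x ≤ u → u ≤ y → f u = p * u + q) :
    ∫ u in x..y, f u = p * (y ^ 2 - x ^ 2) / 2 + q * (y - x) := by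
  have h1 : ∫ u in x..y, f u = ∫ u in x..y, (p * u + q) := by
    apply intervalIntegral.integral_congr
    intro u hu
    rw [Set.uIcc_of_le hxy] at hu
    exact h u hu.1 hu.2
  rw [h1, intervalIntegral.integral_add (Continuous.intervalIntegrable (by fun_prop) _ _)
    (Continuous.intervalIntegrable (by fun_prop) _ _), intervalIntegral.integral_const_mul,
    integral_id, intervalIntegral.integral_const, smul_eq_mul]
  ring

/-- Gini's gamma of the lower bound copula `B̲_t` equals `(3/8)(1+t)² − 1`. -/
theorem gamma_Blower (t : ℝ) (ht : t ∈ Set.Icc (-1 : ℝ) 1) :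
    4 * (∫ u in (0:ℝ)..1, (Blower t u u + Blower t u (1 - u))) - 2
      = 3 / 8 * (1 + t) ^ 2 - 1 := by
  obtain ⟨h1, h2⟩ := ht
  obtain ⟨a, ha⟩ : ∃ a, a = (1 + t) / 4 := ⟨_, rfl⟩
  have ht' : t = 4 * a - 1 := by linarith
  have a0 : 0 ≤ a := by linarith
  have a1 : a ≤ 1 / 2 := by linarith
  obtain ⟨f, hf⟩ : ∃ f : ℝ → ℝ, f = fun u => Blower t u u + Blower t u (1 - u) := ⟨_, rfl⟩
  have hc : Continuous f := by
    rw [hf]; unfold Blower; fun_prop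
  have hi : ∀ x y, IntervalIntegrable f MeasureTheory.volume x y :=
    fun x y => hc.intervalIntegrable x y
  have e : ∀ u, f u = max (max 0 (u + u - 1)) (a - max (1 / 2 - u) 0 - max (1 / 2 - u) 0)
      + max (max 0 0) (a - max (1 / 2 - u) 0 - max (u - 1 / 2) 0) := by
    intro u
    rw [hf, ha]
    simp only [Blower]
    ring_nf
  have i1 := piece_int f 0 0 0 (1/2 - a) (by linarith) (by intro u _ _; rw [e]; grind)
  have i2 := piece_int f 1 (a - 1/2) (1/2 - a) (1/2 - a/2) (by linarith)
    (by intro u _ _; rw [e]; grind)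
  have i3 := piece_int f 3 (2 * a - 3/2) (1/2 - a/2) (1/2) (by linarith)
    (by intro u _ _; rw [e]; grind)
  have i4 := piece_int f (-1) (2 * a + 1/2) (1/2) (1/2 + a/2) (by linarith)
    (by intro u _ _; rw [e]; grind)
  have i5 := piece_int f 1 (a - 1/2) (1/2 + a/2) (1/2 + a) (by linarith)
    (by intro u _ _; rw [e]; grind)
  have i6 := piece_int f 2 (-1) (1/2 + a) 1 (by linarith) (by intro u _ _; rw [e]; grind)
  have key : ∫ u in (0:ℝ)..1, f u = 1 / 4 + 3 * a ^ 2 / 2 := by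
    rw [← intervalIntegral.integral_add_adjacent_intervals (hi 0 (1/2 - a)) (hi _ 1),
      ← intervalIntegral.integral_add_adjacent_intervals (hi (1/2 - a) (1/2 - a/2)) (hi _ 1),
      ← intervalIntegral.integral_add_adjacent_intervals (hi (1/2 - a/2) (1/2)) (hi _ 1),
      ← intervalIntegral.integral_add_adjacent_intervals (hi (1/2) (1/2 + a/2)) (hi _ 1),
      ← intervalIntegral.integral_add_adjacent_intervals (hi (1/2 + a/2) (1/2 + a)) (hi _ 1),
      i1, i2, i3, i4, i5, i6]
    ring
  rw [hf] at key
  rw [key, ha]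
  ring
end

section
/- Let C be a copula, let γ = γ(C) = 4·∫₀¹ ( C(u,u) + C(u,1−u) ) du − 2 and β(C) = 4·C(1/2,1/2) − 1. Then β(C) is bounded below by −1 if −1 ≤ γ ≤ −1/2 and by 1 − 2·√(2(1−γ)/3) if γ > −1/2, and β(C) is bounded above by 1 if 1/2 ≤ γ ≤ 1 and by −1 + 2·√(2(1+γ)/3) if γ < 1/2. -/
/-- Gini's gamma of a copula. -/
noncomputable def giniGamma (C : ℝ → ℝ → ℝ) : ℝ :=
  4 * (∫ u in (0:ℝ)..1, (C u u + C u (1 - u))) - 2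

lemma cop_u {C : ℝ → ℝ → ℝ} (hC : IsCopula C) {u u' v : ℝ} (h0 : 0 ≤ u) (h : u ≤ u') (h1 : u' ≤ 1)
    (hv0 : 0 ≤ v) (hv1 : v ≤ 1) : C u v ≤ C u' v ∧ C u' v ≤ C u v + (u' - u) := by
  have a := hC.2 u u' 0 v h0 h h1 le_rfl hv0 hv1
  have b := hC.2 u u' v 1 h0 h h1 hv0 hv1 le_rfl
  have c := hC.1 u ⟨h0, h.trans h1⟩
  have d := hC.1 u' ⟨h0.trans h, h1⟩
  rw [c.1, d.1] at a
  rw [c.2.2.1, d.2.2.1] at b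
  constructor <;> linarith

lemma cop_v {C : ℝ → ℝ → ℝ} (hC : IsCopula C) {u v v' : ℝ} (h0 : 0 ≤ v) (h : v ≤ v') (h1 : v' ≤ 1)
    (hv0 : 0 ≤ u) (hv1 : u ≤ 1) : C u v ≤ C u v' ∧ C u v' ≤ C u v + (v' - v) := by
  have a := hC.2 0 u v v' le_rfl hv0 hv1 h0 h h1
  have b := hC.2 u 1 v v' hv0 hv1 le_rfl h0 h h1
  have c := hC.1 v ⟨h0, h.trans h1⟩
  have d := hC.1 v' ⟨h0.trans h, h1⟩
  rw [c.2.1, d.2.1] at a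
  rw [c.2.2.2, d.2.2.2] at b
  constructor <;> linarith

lemma cop_lip {C : ℝ → ℝ → ℝ} (hC : IsCopula C) {u u' v v' : ℝ} (hu : u ∈ Set.Icc (0:ℝ) 1)
    (hu' : u' ∈ Set.Icc (0:ℝ) 1) (hv : v ∈ Set.Icc (0:ℝ) 1) (hv' : v' ∈ Set.Icc (0:ℝ) 1) :
    |C u v - C u' v'| ≤ |u - u'| + |v - v'| := by
  have h1 : |C u v - C u' v| ≤ |u - u'| := by
    rcases le_total u u' with h | h
    · have := cop_u hC hu.1 h hu'.2 hv.1 hv.2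
      rw [abs_le, abs_of_nonpos (by linarith)]; constructor <;> linarith
    · have := cop_u hC hu'.1 h hu.2 hv.1 hv.2
      rw [abs_le, abs_of_nonneg (by linarith)]; constructor <;> linarith
  have h2 : |C u' v - C u' v'| ≤ |v - v'| := by
    rcases le_total v v' with h | h
    · have := cop_v hC hv.1 h hv'.2 hu'.1 hu'.2
      rw [abs_le, abs_of_nonpos (by linarith)]; constructor <;> linarith
    · have := cop_v hC hv'.1 h hv.2 hu'.1 hu'.2
      rw [abs_le, abs_of_nonneg (by linarith)]; constructor <;> linarith
  have := abs_sub_le (C u v) (C u' v) (C u' v')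
  linarith

lemma cont_of_lip {f : ℝ → ℝ} (h : ∀ x ∈ Set.Icc (0:ℝ) 1, ∀ y ∈ Set.Icc (0:ℝ) 1,
    |f x - f y| ≤ 2 * |x - y|) : ContinuousOn f (Set.Icc 0 1) := by
  have : LipschitzOnWith 2 f (Set.Icc 0 1) := by
    apply LipschitzOnWith.of_dist_le_mul
    intro x hx y hy
    simpa [Real.dist_eq] using h x hx y hy
  exact this.continuousOn

lemma piece {f : ℝ → ℝ} (hf : ContinuousOn f (Set.Icc 0 1)) {p q a c : ℝ} (h0 : 0 ≤ p)
    (h : p ≤ q) (h1 : q ≤ 1) (hb : ∀ u ∈ Set.Icc p q, a + c * u ≤ f u) :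
    a * (q - p) + c * ((q ^ 2 - p ^ 2) / 2) ≤ ∫ u in p..q, f u := by
  have e : ∫ u in p..q, (a + c * u) = a * (q - p) + c * ((q ^ 2 - p ^ 2) / 2) := by
    rw [intervalIntegral.integral_add (by simp)
      (Continuous.intervalIntegrable (by fun_prop) _ _)]
    rw [intervalIntegral.integral_const_mul, integral_id]
    simp [mul_comm]
  rw [← e]
  refine intervalIntegral.integral_mono_on h (Continuous.intervalIntegrable (by fun_prop) _ _) ?_ hb
  apply ContinuousOn.intervalIntegrable
  rw [Set.uIcc_of_le h]
  exact hf.mono (Set.Icc_subset_Icc h0 h1)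

lemma pieces {f : ℝ → ℝ} (hf : ContinuousOn f (Set.Icc 0 1)) {p q r a₁ c₁ a₂ c₂ a₃ c₃ a₄ c₄ : ℝ}
    (h0 : 0 ≤ p) (h : p ≤ q) (h' : q ≤ r) (h1 : r ≤ 1)
    (b₁ : ∀ u ∈ Set.Icc 0 p, a₁ + c₁ * u ≤ f u)
    (b₂ : ∀ u ∈ Set.Icc p q, a₂ + c₂ * u ≤ f u)
    (b₃ : ∀ u ∈ Set.Icc q r, a₃ + c₃ * u ≤ f u)
    (b₄ : ∀ u ∈ Set.Icc r 1, a₄ + c₄ * u ≤ f u) :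
    a₁ * p + c₁ * (p ^ 2 / 2) + (a₂ * (q - p) + c₂ * ((q ^ 2 - p ^ 2) / 2))
     + (a₃ * (r - q) + c₃ * ((r ^ 2 - q ^ 2) / 2)) + (a₄ * (1 - r) + c₄ * ((1 - r ^ 2) / 2))
      ≤ ∫ u in (0:ℝ)..1, f u := by
  have ii : ∀ x y : ℝ, 0 ≤ x → x ≤ y → y ≤ 1 →
      IntervalIntegrable f MeasureTheory.volume x y := by
    intro x y hx hxy hy
    apply ContinuousOn.intervalIntegrable
    rw [Set.uIcc_of_le hxy]
    exact hf.mono (Set.Icc_subset_Icc hx hy)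
  have e1 := piece hf le_rfl h0 (by linarith) b₁
  have e2 := piece hf h0 h (by linarith) b₂
  have e3 := piece hf (by linarith) h' h1 b₃
  have e4 := piece hf (by linarith) h1 le_rfl b₄
  have s1 := intervalIntegral.integral_add_adjacent_intervals
    (ii 0 p le_rfl h0 (by linarith)) (ii p q h0 h (by linarith))
  have s2 := intervalIntegral.integral_add_adjacent_intervals
    (ii 0 q le_rfl (by linarith) (by linarith)) (ii q r (by linarith) h' (by linarith))
  have s3 := intervalIntegral.integral_add_adjacent_intervals
    (ii 0 r le_rfl (by linarith) (by linarith)) (ii r 1 (by linarith) h1 (by linarith))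
  nlinarith

set_option maxHeartbeats 2000000

/-- Bounds for Blomqvist's beta of a copula in terms of its Gini's gamma. -/
theorem beta_bounds_of_gamma (C : ℝ → ℝ → ℝ) (hC : IsCopula C) :
    (if giniGamma C ≤ -(1/2) then (-1 : ℝ)
      else 1 - 2 * Real.sqrt (2 * (1 - giniGamma C) / 3)) ≤ blomqvistBeta C ∧
    blomqvistBeta C ≤
      (if (1/2 : ℝ) ≤ giniGamma C then (1 : ℝ)
      else -1 + 2 * Real.sqrt (2 * (1 + giniGamma C) / 3)) := by
  have hc1 : ContinuousOn (fun u => C u u) (Set.Icc 0 1) := by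
    apply cont_of_lip
    intro x hx y hy
    have := cop_lip hC hx hy hx hy
    linarith
  have hc2 : ContinuousOn (fun u => C u (1 - u)) (Set.Icc 0 1) := by
    apply cont_of_lip
    intro x hx y hy
    have := cop_lip hC hx hy (v := 1 - x) (v' := 1 - y) ⟨by linarith [hx.2], by linarith [hx.1]⟩
      ⟨by linarith [hy.2], by linarith [hy.1]⟩
    rw [show (1 - x) - (1 - y) = -(x - y) by ring, abs_neg] at this
    linarith
  have hsum : (∫ u in (0:ℝ)..1, (C u u + C u (1 - u))) =
      (∫ u in (0:ℝ)..1, C u u) + ∫ u in (0:ℝ)..1, C u (1 - u) := by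
    apply intervalIntegral.integral_add <;> apply ContinuousOn.intervalIntegrable <;>
      rw [Set.uIcc_of_le zero_le_one] <;> assumption
  -- pointwise Fréchet bounds
  have fr : ∀ u v : ℝ, 0 ≤ u → u ≤ 1 → 0 ≤ v → v ≤ 1 →
      0 ≤ C u v ∧ u + v - 1 ≤ C u v ∧ C u v ≤ u ∧ C u v ≤ v := by
    intro u v hu hu1 hv hv1
    have a := cop_u hC le_rfl hu hu1 hv hv1
    have b := cop_u hC hu hu1 le_rfl hv hv1
    have c := cop_v hC hv hv1 le_rfl hu hu1
    have e := hC.1 v ⟨hv, hv1⟩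
    have e' := hC.1 u ⟨hu, hu1⟩
    rw [e.2.1] at a
    rw [e.2.2.2] at b
    rw [e'.2.2.1] at c
    refine ⟨?_, ?_, ?_, ?_⟩ <;> linarith
  obtain ⟨b, hb⟩ : ∃ b, b = C (1/2) (1/2) := ⟨_, rfl⟩
  obtain ⟨hb0, -, hb1, -⟩ := fr (1/2) (1/2) (by norm_num) (by norm_num) (by norm_num) (by norm_num)
  rw [← hb] at hb0 hb1
  -- bounds around the centre
  have dl : ∀ u : ℝ, 0 ≤ u → u ≤ 1/2 → b - 1 + 2 * u ≤ C u u ∧ C u u ≤ b := by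
    intro u h0 h1
    have x := cop_u hC h0 h1 (by norm_num) (v := 1/2) (by norm_num) (by norm_num)
    have y := cop_v hC h0 h1 (by norm_num) h0 (by linarith)
    rw [← hb] at x
    constructor <;> linarith
  have dr : ∀ u : ℝ, 1/2 ≤ u → u ≤ 1 → b ≤ C u u ∧ C u u ≤ b + 2 * u - 1 := by
    intro u h0 h1
    have x := cop_u hC (by norm_num) h0 h1 (v := 1/2) (by norm_num) (by norm_num)
    have y := cop_v hC (by norm_num) h0 h1 (u := u) (by linarith) (by linarith)
    rw [← hb] at x
    constructor <;> linarith
  have al : ∀ u : ℝ, 0 ≤ u → u ≤ 1/2 →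
      b - 1/2 + u ≤ C u (1 - u) ∧ C u (1 - u) ≤ b + 1/2 - u := by
    intro u h0 h1
    have x := cop_u hC h0 h1 (by norm_num) (v := 1/2) (by norm_num) (by norm_num)
    have y := cop_v hC (v := 1/2) (v' := 1 - u) (by norm_num) (by linarith) (by linarith)
      h0 (by linarith)
    rw [← hb] at x
    constructor <;> linarith
  have ar : ∀ u : ℝ, 1/2 ≤ u → u ≤ 1 →
      b + 1/2 - u ≤ C u (1 - u) ∧ C u (1 - u) ≤ b - 1/2 + u := by
    intro u h0 h1
    have x := cop_u hC (by norm_num) h0 h1 (v := 1/2) (by norm_num) (by norm_num)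
    have y := cop_v hC (v := 1 - u) (v' := 1/2) (by linarith) (by linarith) (by norm_num)
      (u := u) (by linarith) (by linarith)
    rw [← hb] at x
    constructor <;> linarith
  have L1 := pieces hc1 (p := (1 - b)/2) (q := 1/2) (r := (1 + b)/2) (a₁ := 0) (c₁ := 0)
    (a₂ := b - 1) (c₂ := 2) (a₃ := b) (c₃ := 0) (a₄ := -1) (c₄ := 2)
    (by linarith) (by linarith) (by linarith) (by linarith)
    (by rintro u ⟨h, h'⟩; have := fr u u h (by linarith) h (by linarith); linarith)
    (by rintro u ⟨h, h'⟩; have := dl u (by linarith) h'; linarith)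
    (by rintro u ⟨h, h'⟩; have := dr u h (by linarith); linarith)
    (by rintro u ⟨h, h'⟩
        have := fr u u (by linarith) (by linarith) (by linarith) (by linarith)
        linarith)
  have L2 := pieces hc2 (p := 1/2 - b) (q := 1/2) (r := 1/2 + b) (a₁ := 0) (c₁ := 0)
    (a₂ := b - 1/2) (c₂ := 1) (a₃ := b + 1/2) (c₃ := -1) (a₄ := 0) (c₄ := 0)
    (by linarith) (by linarith) (by linarith) (by linarith)
    (by rintro u ⟨h, h'⟩
        have := fr u (1 - u) (by linarith) (by linarith) (by linarith) (by linarith)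
        linarith)
    (by rintro u ⟨h, h'⟩; have := al u (by linarith) h'; linarith)
    (by rintro u ⟨h, h'⟩; have := ar u h (by linarith); linarith)
    (by rintro u ⟨h, h'⟩
        have := fr u (1 - u) (by linarith) (by linarith) (by linarith) (by linarith)
        linarith)
  have U1 := pieces (f := fun u => -C u u) hc1.neg (p := b) (q := 1/2) (r := 1 - b)
    (a₁ := 0) (c₁ := -1)
    (a₂ := -b) (c₂ := 0) (a₃ := 1 - b) (c₃ := -2) (a₄ := 0) (c₄ := -1)
    (by linarith) (by linarith) (by linarith) (by linarith)
    (by rintro u ⟨h, h'⟩; have := fr u u h (by linarith) h (by linarith); linarith)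
    (by rintro u ⟨h, h'⟩; have := dl u (by linarith) h'; linarith)
    (by rintro u ⟨h, h'⟩; have := dr u h (by linarith); linarith)
    (by rintro u ⟨h, h'⟩
        have := fr u u (by linarith) (by linarith) (by linarith) (by linarith)
        linarith)
  have U2 := pieces (f := fun u => -C u (1 - u)) hc2.neg (p := (1/2 + b)/2) (q := 1/2)
    (r := (3/2 - b)/2) (a₁ := 0) (c₁ := -1)
    (a₂ := -b - 1/2) (c₂ := 1) (a₃ := 1/2 - b) (c₃ := -1) (a₄ := -1) (c₄ := 1)
    (by linarith) (by linarith) (by linarith) (by linarith)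
    (by rintro u ⟨h, h'⟩
        have := fr u (1 - u) (by linarith) (by linarith) (by linarith) (by linarith)
        linarith)
    (by rintro u ⟨h, h'⟩; have := al u (by linarith) h'; linarith)
    (by rintro u ⟨h, h'⟩; have := ar u h (by linarith); linarith)
    (by rintro u ⟨h, h'⟩
        have := fr u (1 - u) (by linarith) (by linarith) (by linarith) (by linarith)
        linarith)
  rw [intervalIntegral.integral_neg] at U1 U2
  have hg : giniGamma C = 4 * ((∫ u in (0:ℝ)..1, C u u) + ∫ u in (0:ℝ)..1, C u (1 - u)) - 2 := by
    rw [giniGamma, hsum]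
  have hbeta : blomqvistBeta C = 4 * b - 1 := by rw [blomqvistBeta, hb]
  rw [hbeta]
  constructor
  · split_ifs
    · linarith
    · have : 1 - 2 * b ≤ Real.sqrt (2 * (1 - giniGamma C) / 3) := by
        apply Real.le_sqrt_of_sq_le
        rw [hg]
        ring_nf at L1 L2 U1 U2 ⊢
        linarith
      linarith
  · split_ifs
    · linarith
    · have : 2 * b ≤ Real.sqrt (2 * (1 + giniGamma C) / 3) := by
        apply Real.le_sqrt_of_sq_le
        rw [hg]
        ring_nf at L1 L2 U1 U2 ⊢
        linarith
      linarith
end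

section
/- Let t ∈ [−1,1] and set c = (1+t)/4. For all u, v ∈ [0,1], max{0, u+v−1, c − max(1/2−u,0) − max(1/2−v,0)} = max{ max(u+v−1, 0), min{c, u−1/2+c, v−1/2+c, u+v−1+c} }. In other words, the lower bound B̲_t of the set of copulas with Blomqvist's beta equal to t coincides with the copula C̲^{a,b,c} of the asymmetry construction at a = b = 1/2, c = (1+t)/4. -/
/-- The lower bound `B̲_t` of the set of copulas with Blomqvist's beta equal to `t`
coincides with the copula `C̲^{a,b,c}` of the asymmetry construction at
`a = b = 1/2`, `c = (1+t)/4` (where `d₁ = c`). -/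
theorem Blower_eq_Clow (t : ℝ) (ht : t ∈ Set.Icc (-1 : ℝ) 1) (c : ℝ)
    (hc : c = (1 + t) / 4) :
    ∀ u ∈ Set.Icc (0:ℝ) 1, ∀ v ∈ Set.Icc (0:ℝ) 1,
      max (max 0 (u + v - 1)) (c - max (1 / 2 - u) 0 - max (1 / 2 - v) 0)
        = max (max (u + v - 1) 0)
            (min (min c (u - 1 / 2 + c)) (min (v - 1 / 2 + c) (u + v - 1 + c))) := by
  intro u _ v _
  rw [max_comm (0:ℝ) (u + v - 1)]
  congr 1
  have h : ∀ x : ℝ, max (1 / 2 - x) 0 = -min (x - 1 / 2) 0 := by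
    intro x
    rcases le_total x (1 / 2) with hx | hx
    · rw [max_eq_left (by linarith), min_eq_left (by linarith)]; ring
    · rw [max_eq_right (by linarith), min_eq_right (by linarith)]; ring
  rw [h u, h v]
  rcases le_total u (1 / 2) with hu | hu <;> rcases le_total v (1 / 2) with hv | hv
  · rw [min_eq_left (by linarith : u - 1 / 2 ≤ 0), min_eq_left (by linarith : v - 1 / 2 ≤ 0),
      min_eq_right (by linarith : u - 1 / 2 + c ≤ c),
      min_eq_right (by linarith : u + v - 1 + c ≤ v - 1 / 2 + c), min_eq_right (by linarith)]
    ring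
  · rw [min_eq_left (by linarith : u - 1 / 2 ≤ 0), min_eq_right (by linarith : 0 ≤ v - 1 / 2),
      min_eq_right (by linarith : u - 1 / 2 + c ≤ c),
      min_eq_right (by linarith : u + v - 1 + c ≤ v - 1 / 2 + c), min_eq_left (by linarith)]
    ring
  · rw [min_eq_right (by linarith : 0 ≤ u - 1 / 2), min_eq_left (by linarith : v - 1 / 2 ≤ 0),
      min_eq_left (by linarith : c ≤ u - 1 / 2 + c),
      min_eq_left (by linarith : v - 1 / 2 + c ≤ u + v - 1 + c), min_eq_right (by linarith)]
    ring
  · rw [min_eq_right (by linarith : 0 ≤ u - 1 / 2), min_eq_right (by linarith : 0 ≤ v - 1 / 2),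
      min_eq_left (by linarith : c ≤ u - 1 / 2 + c),
      min_eq_left (by linarith : v - 1 / 2 + c ≤ u + v - 1 + c), min_eq_left (by linarith)]
    ring
end

section
/- Let t ∈ [−1,1] and set c = (1−t)/4 and d₂ = 1/2 − c = (1+t)/4. For all u, v ∈ [0,1], min{u, v, (1+t)/4 + max(u−1/2,0) + max(v−1/2,0)} = min{ min(u,v), max{d₂, u−1/2+d₂, v−1/2+d₂, u+v−1+d₂} }. In other words, the upper bound B̄_t of the set of copulas with Blomqvist's beta equal to t coincides with the copula C̄^{b,a,c} of the asymmetry construction at a = b = 1/2, c = (1−t)/4. -/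
/-- The upper bound `B̄_t` of the set of copulas with Blomqvist's beta equal to `t`
coincides with the copula `C̄^{b,a,c}` of the asymmetry construction at
`a = b = 1/2`, `c = (1−t)/4` (where `d₂ = 1/2 − c = (1+t)/4`). -/
theorem Bupper_eq_Cup (t : ℝ) (ht : t ∈ Set.Icc (-1 : ℝ) 1) (c d₂ : ℝ)
    (hc : c = (1 - t) / 4) (hd : d₂ = 1 / 2 - c) :
    ∀ u ∈ Set.Icc (0:ℝ) 1, ∀ v ∈ Set.Icc (0:ℝ) 1,
      min (min u v) ((1 + t) / 4 + max (u - 1 / 2) 0 + max (v - 1 / 2) 0)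
        = min (min u v)
            (max (max d₂ (u - 1 / 2 + d₂)) (max (v - 1 / 2 + d₂) (u + v - 1 + d₂))) := by
  intro u _ v _
  congr 1
  rcases le_total u (1 / 2) with hu | hu <;> rcases le_total v (1 / 2) with hv | hv
  · rw [max_eq_right (by linarith : u - 1 / 2 ≤ 0), max_eq_right (by linarith : v - 1 / 2 ≤ 0)]
    apply le_antisymm
    · exact le_max_of_le_left (le_max_of_le_left (by linarith))
    · refine max_le (max_le ?_ ?_) (max_le ?_ ?_) <;> linarith
  · rw [max_eq_right (by linarith : u - 1 / 2 ≤ 0), max_eq_left (by linarith : 0 ≤ v - 1 / 2)]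
    apply le_antisymm
    · exact le_max_of_le_right (le_max_of_le_left (by linarith))
    · refine max_le (max_le ?_ ?_) (max_le ?_ ?_) <;> linarith
  · rw [max_eq_left (by linarith : 0 ≤ u - 1 / 2), max_eq_right (by linarith : v - 1 / 2 ≤ 0)]
    apply le_antisymm
    · exact le_max_of_le_left (le_max_of_le_right (by linarith))
    · refine max_le (max_le ?_ ?_) (max_le ?_ ?_) <;> linarith
  · rw [max_eq_left (by linarith : 0 ≤ u - 1 / 2), max_eq_left (by linarith : 0 ≤ v - 1 / 2)]
    apply le_antisymm
    · exact le_max_of_le_right (le_max_of_le_right (by linarith))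
    · refine max_le (max_le ?_ ?_) (max_le ?_ ?_) <;> linarith
end

section
/- Let a, b ∈ [0,1] and 0 ≤ c ≤ min{a, b, 1−a, 1−b, |b−a|}, and set d₁ = max(a+b−1,0) + c. Then the concordance of the lower Fréchet–Hoeffding copula W with C̲^{a,b,c} satisfies Q(W, C̲^{a,b,c}) = 4·∫₀¹ C̲^{a,b,c}(u, 1−u) du − 1 = 4d₁(1−a−b+d₁) − 1; equivalently, ∫₀¹ C̲^{a,b,c}(u, 1−u) du = d₁(1−a−b+d₁). -/
/-- The lower bound copula `C̲^{a,b,c}` of the asymmetry construction, where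
`d₁ = max(a+b−1,0) + c`. -/
noncomputable def CLow (a b c u v : ℝ) : ℝ :=
  max (max (u + v - 1) 0)
    (min (min (max (a + b - 1) 0 + c) (u - a + (max (a + b - 1) 0 + c)))
      (min (v - b + (max (a + b - 1) 0 + c)) (u + v - a - b + (max (a + b - 1) 0 + c))))

theorem trap_integral (p q m : ℝ) (hp : 0 ≤ p) (hq : q ≤ 1) (hm : 0 ≤ m)
    (h2 : 2 * m ≤ q - p) :
    (∫ u in (0:ℝ)..1, max 0 (min m (min (u - p) (q - u)))) = m * (q - p - m) := by
  have hcont : Continuous (fun u : ℝ => max 0 (min m (min (u - p) (q - u)))) := by fun_prop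
  have hi : ∀ x y : ℝ, IntervalIntegrable
      (fun u : ℝ => max 0 (min m (min (u - p) (q - u)))) MeasureTheory.volume x y :=
    fun x y => hcont.intervalIntegrable x y
  rw [← intervalIntegral.integral_add_adjacent_intervals (hi 0 p) (hi p 1),
    ← intervalIntegral.integral_add_adjacent_intervals (hi p (p + m)) (hi (p + m) 1),
    ← intervalIntegral.integral_add_adjacent_intervals (hi (p + m) (q - m)) (hi (q - m) 1),
    ← intervalIntegral.integral_add_adjacent_intervals (hi (q - m) q) (hi q 1)]
  have e1 : (∫ u in (0:ℝ)..p, max 0 (min m (min (u - p) (q - u)))) = ∫ u in (0:ℝ)..p, (0:ℝ) := by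
    apply intervalIntegral.integral_congr
    intro u hu
    rw [Set.uIcc_of_le (by linarith)] at hu
    obtain ⟨h3, h4⟩ := hu
    exact max_eq_left (min_le_of_right_le (min_le_of_left_le (by linarith)))
  have e2 : (∫ u in p..(p + m), max 0 (min m (min (u - p) (q - u))))
      = ∫ u in p..(p + m), (u - p) := by
    apply intervalIntegral.integral_congr
    intro u hu
    rw [Set.uIcc_of_le (by linarith)] at hu
    obtain ⟨h3, h4⟩ := hu
    simp only
    rw [min_eq_left (by linarith : u - p ≤ q - u), min_eq_right (by linarith),
      max_eq_right (by linarith)]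
  have e3 : (∫ u in (p + m)..(q - m), max 0 (min m (min (u - p) (q - u))))
      = ∫ u in (p + m)..(q - m), m := by
    apply intervalIntegral.integral_congr
    intro u hu
    rw [Set.uIcc_of_le (by linarith)] at hu
    obtain ⟨h3, h4⟩ := hu
    simp only
    rw [min_eq_left (le_min (by linarith) (by linarith)), max_eq_right hm]
  have e4 : (∫ u in (q - m)..q, max 0 (min m (min (u - p) (q - u))))
      = ∫ u in (q - m)..q, (q - u) := by
    apply intervalIntegral.integral_congr
    intro u hu
    rw [Set.uIcc_of_le (by linarith)] at hu
    obtain ⟨h3, h4⟩ := hu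
    simp only
    rw [min_eq_right (by linarith : q - u ≤ u - p), min_eq_right (by linarith),
      max_eq_right (by linarith)]
  have e5 : (∫ u in q..(1:ℝ), max 0 (min m (min (u - p) (q - u)))) = ∫ u in q..(1:ℝ), (0:ℝ) := by
    apply intervalIntegral.integral_congr
    intro u hu
    rw [Set.uIcc_of_le (by linarith)] at hu
    obtain ⟨h3, h4⟩ := hu
    exact max_eq_left (min_le_of_right_le (min_le_of_right_le (by linarith)))
  rw [e1, e2, e3, e4, e5, intervalIntegral.integral_sub (by simp) (by simp),
    intervalIntegral.integral_sub (by simp) (by simp)]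
  simp only [intervalIntegral.integral_const, integral_id, smul_eq_mul]
  ring

/-- `Q(W, C̲^{a,b,c}) = 4d₁(1−a−b+d₁) − 1`, where `W` is the lower Fréchet–Hoeffding
copula whose mass lies on the anti-diagonal. -/
theorem Q_W_CLow (a b c : ℝ) (ha : a ∈ Set.Icc (0:ℝ) 1) (hb : b ∈ Set.Icc (0:ℝ) 1)
    (hc0 : 0 ≤ c)
    (hc : c ≤ min (min a b) (min (min (1 - a) (1 - b)) |b - a|))
    (d₁ : ℝ) (hd : d₁ = max (a + b - 1) 0 + c) :
    4 * (∫ u in (0:ℝ)..1, CLow a b c u (1 - u)) - 1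
      = 4 * d₁ * (1 - a - b + d₁) - 1 := by
  obtain ⟨ha0, ha1⟩ := ha
  obtain ⟨hb0, hb1⟩ := hb
  simp only [le_min_iff] at hc
  obtain ⟨⟨hca, hcb⟩, ⟨hca', hcb'⟩, -⟩ := hc
  have hd0 : 0 ≤ d₁ := by rw [hd]; positivity
  have he0 : 0 ≤ 1 - a - b + d₁ := by
    have := le_max_left (a + b - 1) 0
    linarith
  have hda : d₁ ≤ a := by
    rw [hd]; rcases max_cases (a + b - 1) 0 with h | h <;> linarith
  have hdb : d₁ ≤ b := by
    rw [hd]; rcases max_cases (a + b - 1) 0 with h | h <;> linarith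
  have key : ∀ u : ℝ, CLow a b c u (1 - u) =
      max 0 (min (min d₁ (1 - a - b + d₁)) (min (u - (a - d₁)) ((1 - b + d₁) - u))) := by
    intro u
    unfold CLow
    rw [← hd]
    rw [show u + (1 - u) - 1 = 0 by ring, max_self, min_min_min_comm,
      show u + (1 - u) - a - b + d₁ = 1 - a - b + d₁ by ring,
      show u - (a - d₁) = u - a + d₁ by ring,
      show 1 - b + d₁ - u = 1 - u - b + d₁ by ring]
    congr 1
    ac_rfl
  simp only [key]
  rw [trap_integral _ _ _ (by linarith) (by linarith) (le_min hd0 he0)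
    (by linarith [min_le_left d₁ (1 - a - b + d₁), min_le_right d₁ (1 - a - b + d₁)])]
  rcases min_cases d₁ (1 - a - b + d₁) with h | h <;> rw [h.1] <;> ring
end

section
/- Let a, b ∈ [0,1] and 0 ≤ c ≤ min{a, b, 1−a, 1−b, |b−a|}, and set d₁ = max(a+b−1,0) + c. Then the concordance of the independence copula Π with C̲^{a,b,c} satisfies Q(Π, C̲^{a,b,c}) = 4·∫₀¹∫₀¹ C̲^{a,b,c}(u,v) du dv − 1 = 2d₁(1−a−b+d₁)(1−a−b+2d₁) − 1/3. -/
theorem ramp_integral (t : ℝ) (h0 : 0 ≤ t) (h1 : t ≤ 1) :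
    ∫ v in (0:ℝ)..1, max (v - t) 0 = (1 - t) ^ 2 / 2 := by
  have hc : Continuous fun v : ℝ => max (v - t) 0 := by fun_prop
  rw [← intervalIntegral.integral_add_adjacent_intervals (b := t)
    (hc.intervalIntegrable _ _) (hc.intervalIntegrable _ _)]
  have e1 : ∫ v in (0:ℝ)..t, max (v - t) 0 = ∫ v in (0:ℝ)..t, (0:ℝ) := by
    apply intervalIntegral.integral_congr
    intro v hv
    rw [Set.uIcc_of_le h0] at hv
    exact max_eq_right (by linarith [hv.2])
  have e2 : ∫ v in t..1, max (v - t) 0 = ∫ v in t..1, (v - t) := by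
    apply intervalIntegral.integral_congr
    intro v hv
    rw [Set.uIcc_of_le h1] at hv
    exact max_eq_left (by linarith [hv.1])
  rw [e1, e2, intervalIntegral.integral_sub (by simp) (by simp)]
  simp
  ring

theorem ramps_integral (p q r s : ℝ) (α β γ δ : ℝ)
    (hp : 0 ≤ p ∧ p ≤ 1) (hq : 0 ≤ q ∧ q ≤ 1) (hr : 0 ≤ r ∧ r ≤ 1) (hs : 0 ≤ s ∧ s ≤ 1) :
    ∫ v in (0:ℝ)..1, (α * max (v - p) 0 + β * max (v - q) 0 + γ * max (v - r) 0
      + δ * max (v - s) 0)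
    = α * ((1 - p) ^ 2 / 2) + β * ((1 - q) ^ 2 / 2) + γ * ((1 - r) ^ 2 / 2)
      + δ * ((1 - s) ^ 2 / 2) := by
  have hi : ∀ A t : ℝ, IntervalIntegrable (fun v : ℝ => A * max (v - t) 0)
      MeasureTheory.volume 0 1 := fun A t =>
    Continuous.intervalIntegrable (by fun_prop) _ _
  rw [intervalIntegral.integral_add (((hi _ _).add (hi _ _)).add (hi _ _)) (hi _ _),
    intervalIntegral.integral_add ((hi _ _).add (hi _ _)) (hi _ _),
    intervalIntegral.integral_add (hi _ _) (hi _ _)]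
  simp only [intervalIntegral.integral_const_mul]
  rw [ramp_integral p hp.1 hp.2, ramp_integral q hq.1 hq.2, ramp_integral r hr.1 hr.2,
    ramp_integral s hs.1 hs.2]

theorem inner_integral (a b d u : ℝ) (hd0 : 0 ≤ d) (hda : d ≤ a) (hdb : d ≤ b)
    (ha : a ≤ 1) (hb : b ≤ 1)
    (he : 0 ≤ 1 - a - b + d) (hu0 : 0 ≤ u) (hu1 : u ≤ 1) :
    ∫ v in (0:ℝ)..1, max (max (u + v - 1) 0)
      (min (min d (u - a + d)) (min (v - b + d) (u + v - a - b + d)))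
    = u ^ 2 / 2 + ((1 - a - b + d) * max (u - (a - d)) 0
      + (-(1 - a - b + 2 * d)) * max (u - a) 0 + d * max (u - (1 - b + d)) 0
      + 0 * max (u - 0) 0) := by
  have key : ∀ p s : ℝ, (0 ≤ p ∧ p ≤ 1) → (0 ≤ s ∧ s ≤ 1) → ∀ δ : ℝ,
      (∀ v, max (max (u + v - 1) 0)
        (min (min d (u - a + d)) (min (v - b + d) (u + v - a - b + d)))
        = δ * max (v - p) 0 + (-δ) * max (v - b) 0 + (1 - δ) * max (v - (1 - u)) 0
          + δ * max (v - s) 0) →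
      ∫ v in (0:ℝ)..1, max (max (u + v - 1) 0)
        (min (min d (u - a + d)) (min (v - b + d) (u + v - a - b + d)))
      = δ * ((1 - p) ^ 2 / 2) + (-δ) * ((1 - b) ^ 2 / 2) + (1 - δ) * ((1 - (1 - u)) ^ 2 / 2)
      + δ * ((1 - s) ^ 2 / 2) := by
    intro p s hp hs δ h
    simp only [h]
    exact ramps_integral p b (1 - u) s _ _ _ _ hp ⟨by linarith, hb⟩
      ⟨by linarith, by linarith⟩ hs
  rcases le_total u (a - d) with h1 | h1
  · rw [key 0 0 (by simp) (by simp) 0 (by intro v; grind),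
      max_eq_right (by linarith), max_eq_right (by linarith), max_eq_right (by linarith)]
    ring
  rcases le_total u a with h2 | h2
  · rw [key (b - (u - a + d)) (1 - a + d) ⟨by linarith, by linarith⟩ ⟨by linarith, by linarith⟩ 1
      (by intro v; grind),
      max_eq_left (by linarith), max_eq_right (by linarith), max_eq_right (by linarith)]
    ring
  rcases le_total u (1 - b + d) with h3 | h3
  · rw [key (b - d) (1 - u + d) ⟨by linarith, by linarith⟩ ⟨by linarith, by linarith⟩ 1
      (by intro v; grind),
      max_eq_left (by linarith), max_eq_left (by linarith), max_eq_right (by linarith)]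
    ring
  · rw [key 0 0 (by simp) (by simp) 0 (by intro v; grind),
      max_eq_left (by linarith), max_eq_left (by linarith), max_eq_left (by linarith)]
    ring

/-- `Q(Π, C̲^{a,b,c}) = 2d₁(1−a−b+d₁)(1−a−b+2d₁) − 1/3`, where `Π` is the independence
copula whose induced measure is the Lebesgue measure on `[0,1]²`. -/
theorem Q_Pi_CLow (a b c : ℝ) (ha : a ∈ Set.Icc (0:ℝ) 1) (hb : b ∈ Set.Icc (0:ℝ) 1)
    (hc0 : 0 ≤ c)
    (hc : c ≤ min (min a b) (min (min (1 - a) (1 - b)) |b - a|))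
    (d₁ : ℝ) (hd : d₁ = max (a + b - 1) 0 + c) :
    4 * (∫ u in (0:ℝ)..1, ∫ v in (0:ℝ)..1, CLow a b c u v) - 1
      = 2 * d₁ * (1 - a - b + d₁) * (1 - a - b + 2 * d₁) - 1 / 3 := by
  obtain ⟨ha0, ha1⟩ := ha
  obtain ⟨hb0, hb1⟩ := hb
  simp only [le_min_iff] at hc
  obtain ⟨⟨hca, hcb⟩, ⟨hca', hcb'⟩, -⟩ := hc
  have hm : d₁ ≤ a ∧ d₁ ≤ b ∧ 0 ≤ d₁ ∧ 0 ≤ 1 - a - b + d₁ := by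
    rcases max_cases (a + b - 1) 0 with h | h <;>
      refine ⟨?_, ?_, ?_, ?_⟩ <;> linarith
  obtain ⟨hda, hdb, hd0, he⟩ := hm
  simp only [CLow, ← hd]
  have e0 : ∀ u ∈ Set.uIcc (0:ℝ) 1, _ = _ := fun u hu =>
    inner_integral a b d₁ u hd0 hda hdb ha1 hb1 he
      (Set.uIcc_of_le (zero_le_one (α := ℝ)) ▸ hu).1 (Set.uIcc_of_le (zero_le_one (α := ℝ)) ▸ hu).2
  have e1 := intervalIntegral.integral_congr (μ := MeasureTheory.volume) e0
  rw [e1, intervalIntegral.integral_add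
    (Continuous.intervalIntegrable (by fun_prop) _ _)
    (Continuous.intervalIntegrable (by fun_prop) _ _),
    ramps_integral (a - d₁) a (1 - b + d₁) 0 _ _ _ _ ⟨by linarith, by linarith⟩
      ⟨ha0, ha1⟩ ⟨by linarith, by linarith⟩ (by simp)]
  simp only [intervalIntegral.integral_div, integral_pow]
  norm_num
  ring
end

section
/- Let a, b ∈ [0,1] and 0 ≤ c ≤ min{a, b, 1−a, 1−b, |b−a|}, and set d₁ = max(a+b−1,0) + c. Then Q(C̲^{a,b,c}, C̲^{a,b,c}) = 4·∫₀¹ C̲^{a,b,c}(u, S(u)) du − 1 = 4d₁(1−a−b+d₁) − 1, where S is the support map of C̲^{a,b,c} given by S(u) = 1−u for u ∈ [0, a−d₁] ∪ [1−b+d₁, 1], S(u) = a+b−d₁−u for u ∈ (a−d₁, a], and S(u) = 1+d₁−u for u ∈ (a, 1−b+d₁). -/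
/-- The support map `S` of `C̲^{a,b,c}`: `S(u) = 1−u` on `[0, a−d₁] ∪ [1−b+d₁, 1]`,
`S(u) = a+b−d₁−u` on `(a−d₁, a]`, and `S(u) = 1+d₁−u` on `(a, 1−b+d₁)`. -/
noncomputable def SLow (a b d₁ u : ℝ) : ℝ :=
  if u ≤ a - d₁ then 1 - u
  else if u ≤ a then a + b - d₁ - u
  else if u < 1 - b + d₁ then 1 + d₁ - u
  else 1 - u

/-- `Q(C̲^{a,b,c}, C̲^{a,b,c}) = 4d₁(1−a−b+d₁) − 1`. -/
theorem Q_CLow_CLow (a b c : ℝ) (ha : a ∈ Set.Icc (0:ℝ) 1) (hb : b ∈ Set.Icc (0:ℝ) 1)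
    (hc0 : 0 ≤ c)
    (hc : c ≤ min (min a b) (min (min (1 - a) (1 - b)) |b - a|))
    (d₁ : ℝ) (hd : d₁ = max (a + b - 1) 0 + c) :
    4 * (∫ u in (0:ℝ)..1, CLow a b c u (SLow a b d₁ u)) - 1
      = 4 * d₁ * (1 - a - b + d₁) - 1 := by
  obtain ⟨ha0, ha1⟩ := ha
  obtain ⟨hb0, hb1⟩ := hb
  simp only [le_min_iff] at hc
  obtain ⟨⟨hca, hcb⟩, ⟨hca', hcb'⟩, -⟩ := hc
  have hd0 : 0 ≤ d₁ := by rw [hd]; positivity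
  have hda : d₁ ≤ a := by
    rcases max_cases (a + b - 1) 0 with h | h <;> linarith [h.1]
  have hdb : d₁ ≤ b := by
    rcases max_cases (a + b - 1) 0 with h | h <;> linarith [h.1]
  have he : 0 ≤ 1 - a - b + d₁ := by linarith [le_max_left (a + b - 1) 0]
  have key : ∀ u : ℝ, CLow a b c u (SLow a b d₁ u)
      = (Set.Ioo a (1 - b + d₁)).indicator (fun _ => d₁) u := by
    intro u
    unfold CLow SLow
    rw [← hd]
    by_cases h1 : u ≤ a - d₁
    · rw [if_pos h1, Set.indicator_of_notMem (fun h => by linarith [h.1])]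
      rw [max_eq_left]
      · rw [max_eq_right]; linarith
      · exact ((min_le_left _ _).trans (min_le_right _ _)).trans
          (le_max_of_le_right (by linarith))
    · rw [if_neg h1]
      by_cases h2 : u ≤ a
      · rw [if_pos h2, Set.indicator_of_notMem (fun h => by linarith [h.1])]
        rw [max_eq_left]
        · rw [max_eq_right]; linarith
        · exact ((min_le_right _ _).trans (min_le_right _ _)).trans
            (le_max_of_le_right (by linarith))
      · rw [if_neg h2]
        by_cases h3 : u < 1 - b + d₁
        · rw [if_pos h3, Set.indicator_of_mem (Set.mem_Ioo.mpr ⟨not_le.mp h2, h3⟩)]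
          rw [max_eq_left]
          · rw [max_eq_left] <;> linarith
          · exact ((min_le_left _ _).trans (min_le_left _ _)).trans
              (le_max_of_le_left (by linarith))
        · rw [if_neg h3, Set.indicator_of_notMem (fun h => h3 h.2)]
          rw [max_eq_left]
          · rw [max_eq_right]; linarith
          · exact ((min_le_right _ _).trans (min_le_left _ _)).trans
              (le_max_of_le_right (by linarith))
  have hsub : Set.Ioc (0:ℝ) 1 ∩ Set.Ioo a (1 - b + d₁) = Set.Ioo a (1 - b + d₁) := by
    apply Set.inter_eq_right.mpr
    intro u hu
    exact ⟨by linarith [hu.1], by linarith [hu.2]⟩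
  simp only [key]
  rw [intervalIntegral.integral_of_le zero_le_one,
    MeasureTheory.setIntegral_indicator measurableSet_Ioo, hsub,
    MeasureTheory.setIntegral_const, Real.volume_real_Ioo_of_le (by linarith), smul_eq_mul]
  ring
end

section
/- Let a, b ∈ [0,1] and 0 ≤ c ≤ min{a, b, 1−a, 1−b, |b−a|}, and set d₂ = min(a,b) − c. Then Q(C̄^{b,a,c}, C̄^{b,a,c}) = 4·∫₀¹ C̄^{b,a,c}(u, T(u)) du − 1 = 1 − 4(a−d₂)(b−d₂), where T is the support map of C̄^{b,a,c} given by T(u) = u for u ∈ [0, d₂] ∪ [a+b−d₂, 1], T(u) = u + a − d₂ for u ∈ (d₂, b], and T(u) = u − b + d₂ for u ∈ (b, a+b−d₂). -/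
/-- The upper bound copula `C̄^{b,a,c}` of the asymmetry construction, where
`d₂ = min(a,b) − c`. -/
noncomputable def CUp (a b c u v : ℝ) : ℝ :=
  min (min u v)
    (max (max (min a b - c) (u - b + (min a b - c)))
      (max (v - a + (min a b - c)) (u + v - a - b + (min a b - c))))

/-- The support map `T` of `C̄^{b,a,c}`: `T(u) = u` on `[0, d₂] ∪ [a+b−d₂, 1]`,
`T(u) = u + a − d₂` on `(d₂, b]`, and `T(u) = u − b + d₂` on `(b, a+b−d₂)`. -/
noncomputable def TUp (a b d₂ u : ℝ) : ℝ :=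
  if u ≤ d₂ then u
  else if u ≤ b then u + a - d₂
  else if u < a + b - d₂ then u - b + d₂
  else u

/-- `Q(C̄^{b,a,c}, C̄^{b,a,c}) = 1 − 4(a−d₂)(b−d₂)`. -/
theorem Q_CUp_CUp (a b c : ℝ) (ha : a ∈ Set.Icc (0:ℝ) 1) (hb : b ∈ Set.Icc (0:ℝ) 1)
    (hc0 : 0 ≤ c)
    (hc : c ≤ min (min a b) (min (min (1 - a) (1 - b)) |b - a|))
    (d₂ : ℝ) (hd : d₂ = min a b - c) :
    4 * (∫ u in (0:ℝ)..1, CUp a b c u (TUp a b d₂ u)) - 1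
      = 1 - 4 * (a - d₂) * (b - d₂) := by
  have hab : d₂ ≤ a ∧ d₂ ≤ b ∧ 0 ≤ d₂ ∧ a + b - d₂ ≤ 1 := by
    simp only [le_min_iff] at hc
    obtain ⟨⟨h1, h2⟩, ⟨h3, h4⟩, -⟩ := hc
    rcases min_cases a b with ⟨h, h'⟩ | ⟨h, h'⟩ <;> rw [h] at hd <;>
      refine ⟨?_, ?_, ?_, ?_⟩ <;> linarith
  obtain ⟨hda, hdb, hd0, hd1⟩ := hab
  obtain ⟨hb0, hb1⟩ := hb
  have key : ∀ u : ℝ, CUp a b c u (TUp a b d₂ u)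
      = u - (Set.Ioo b (a + b - d₂)).indicator (fun _ => b - d₂) u := by
    intro u
    unfold CUp
    rw [← hd]
    unfold TUp
    simp only [Set.indicator_apply, Set.mem_Ioo]
    split_ifs with h1 h2 h3 h4 h5 h6 h7 <;> grind
  simp_rw [key]
  have hint : MeasureTheory.Integrable
      ((Set.Ioo b (a + b - d₂)).indicator (fun _ => b - d₂)) MeasureTheory.volume := by
    rw [MeasureTheory.integrable_indicator_iff measurableSet_Ioo]
    exact MeasureTheory.integrableOn_const (by simp)
  have hI : ∫ u in (0:ℝ)..1, (Set.Ioo b (a + b - d₂)).indicator (fun _ => b - d₂) u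
      = (a - d₂) * (b - d₂) := by
    rw [intervalIntegral.integral_of_le zero_le_one,
      MeasureTheory.setIntegral_indicator measurableSet_Ioo]
    have : Set.Ioc (0:ℝ) 1 ∩ Set.Ioo b (a + b - d₂) = Set.Ioo b (a + b - d₂) := by
      apply Set.inter_eq_right.2
      rintro x ⟨hx1, hx2⟩
      exact ⟨by linarith, by linarith⟩
    rw [this, MeasureTheory.setIntegral_const, MeasureTheory.measureReal_def, Real.volume_Ioo,
      ENNReal.toReal_ofReal (by linarith), smul_eq_mul]
    ring
  rw [intervalIntegral.integral_sub (by simp) hint.intervalIntegrable, hI, integral_id]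
  ring
end
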